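/- arXiv:1904.08578 — 3 statements merged into one kernel-verified Lean document; each statement's English description precedes it below -/
import Mathlib

section
/- Let V be a cuspidal weight module over the twisted Heisenberg–Virasoro algebra 𝔱 which contains no trivial 𝔱-vector. Then there exists a positive integer m such that for every nonzero weight vector v whose weight (L₀-eigenvalue) is nonzero, every simple 𝔱-submodule V′ of the 𝔱-submodule generated by v satisfies V′ ⊆ Σ_{k=1}^m 𝔱^k v. -/
open Submodule

/-- A module over the twisted Heisenberg–Virasoro algebra `𝔱`: a complex vector
space with operators `L m`, `H m` and a scalar `c₀` (the action of the central
element `C`) realizing the defining brackets as commutators. -/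
structure HVRep (V : Type) [AddCommGroup V] [Module ℂ V] : Type where
  L : ℤ → V →ₗ[ℂ] V
  H : ℤ → V →ₗ[ℂ] V
  c₀ : ℂ
  rel_LL : ∀ (m n : ℤ) (v : V),
    L m (L n v) - L n (L m v) =
      ((n : ℂ) - (m : ℂ)) • L (m + n) v +
        ((1 / 12 : ℂ) * ((n : ℂ) ^ 3 - (n : ℂ)) *
          (if m + n = 0 then (1 : ℂ) else 0) * c₀) • v
  rel_HH : ∀ (m n : ℤ) (v : V),
    H m (H n v) - H n (H m v) =
      ((1 / 3 : ℂ) * (m : ℂ) * (if m + n = 0 then (1 : ℂ) else 0) * c₀) • v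
  rel_LH : ∀ (m n : ℤ) (v : V),
    L m (H n v) - H n (L m v) = (n : ℂ) • H (m + n) v

namespace HVRep

variable {V : Type} [AddCommGroup V] [Module ℂ V]

/-- The weight space `V_μ = {v ∈ V : L₀ v = μ v}`. -/
def wt (ρ : HVRep V) (μ : ℂ) : Submodule ℂ V :=
  Module.End.eigenspace (ρ.L 0) μ

/-- `V` is a weight module: it is the sum of its weight spaces. -/
def IsWeight (ρ : HVRep V) : Prop := (⨆ μ : ℂ, ρ.wt μ) = ⊤

/-- `V` is cuspidal: a weight module with uniformly bounded weight multiplicities. -/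
def Cuspidal (ρ : HVRep V) : Prop :=
  ρ.IsWeight ∧ ∃ p : ℕ, ∀ μ : ℂ, Module.rank ℂ ↥(ρ.wt μ) ≤ (p : Cardinal)

/-- A subspace invariant under all the operators. -/
def IsSubmod (ρ : HVRep V) (W : Submodule ℂ V) : Prop :=
  (∀ (m : ℤ), ∀ v ∈ W, ρ.L m v ∈ W) ∧ (∀ (m : ℤ), ∀ v ∈ W, ρ.H m v ∈ W)

/-- The set of operators `{L_n, H_n : n ∈ ℤ}`. -/
def ops (ρ : HVRep V) : Set (V →ₗ[ℂ] V) := Set.range ρ.L ∪ Set.range ρ.H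

/-- `tpow k S`: the set of all vectors `x₁ x₂ ⋯ x_k v` with `x_j ∈ {L_n, H_n}` and
`v ∈ S`; so `tpow k {v}` is the set `𝔱^k v` of the paper. -/
def tpow (ρ : HVRep V) : ℕ → Set V → Set V
  | 0, S => S
  | k + 1, S => {w | ∃ x ∈ ρ.ops, ∃ u ∈ ρ.tpow k S, w = x u}

/-- The `𝔱`-submodule `U(𝔱) v` generated by `v`. -/
def genBy (ρ : HVRep V) (v : V) : Submodule ℂ V :=
  Submodule.span ℂ (⋃ k : ℕ, ρ.tpow k {v})

/-- A nonzero invariant subspace which is a simple (nontrivial, with no invariant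
subspaces other than `0` and itself) `𝔱`-module. -/
def IsSimpleSubmod (ρ : HVRep V) (W : Submodule ℂ V) : Prop :=
  ρ.IsSubmod W ∧ (¬ ∀ (m : ℤ), ∀ v ∈ W, ρ.L m v = 0 ∧ ρ.H m v = 0) ∧
    ∀ U : Submodule ℂ V, ρ.IsSubmod U → U ≤ W → U = ⊥ ∨ U = W

end HVRep

namespace HVRep

open scoped Pointwise

variable {V : Type} [AddCommGroup V] [Module ℂ V]

/-- Generators together with the identity. -/
def gens (ρ : HVRep V) : Set (Module.End ℂ V) := insert 1 (Set.range ρ.L ∪ Set.range ρ.H)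

/-- Span of generators and identity: first step of the filtration of the enveloping algebra. -/
def T (ρ : HVRep V) : Submodule ℂ (Module.End ℂ V) := Submodule.span ℂ ρ.gens

lemma one_mem_T (ρ : HVRep V) : (1 : Module.End ℂ V) ∈ ρ.T :=
  subset_span (Set.mem_insert _ _)

lemma L_mem_T (ρ : HVRep V) (n : ℤ) : (ρ.L n : Module.End ℂ V) ∈ ρ.T :=
  subset_span (Set.mem_insert_of_mem _ (Or.inl ⟨n, rfl⟩))

lemma H_mem_T (ρ : HVRep V) (n : ℤ) : (ρ.H n : Module.End ℂ V) ∈ ρ.T :=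
  subset_span (Set.mem_insert_of_mem _ (Or.inr ⟨n, rfl⟩))

lemma LL_eq (ρ : HVRep V) (m n : ℤ) :
    (ρ.L m : Module.End ℂ V) * ρ.L n - ρ.L n * ρ.L m = ((n : ℂ) - (m : ℂ)) • ρ.L (m + n) +
        ((1 / 12 : ℂ) * ((n : ℂ) ^ 3 - (n : ℂ)) *
          (if m + n = 0 then (1 : ℂ) else 0) * ρ.c₀) • (1 : Module.End ℂ V) := by
  ext v; exact ρ.rel_LL m n v

lemma HH_eq (ρ : HVRep V) (m n : ℤ) :
    (ρ.H m : Module.End ℂ V) * ρ.H n - ρ.H n * ρ.H m =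
      ((1 / 3 : ℂ) * (m : ℂ) * (if m + n = 0 then (1 : ℂ) else 0) * ρ.c₀) •
        (1 : Module.End ℂ V) := by
  ext v; exact ρ.rel_HH m n v

lemma LH_eq (ρ : HVRep V) (m n : ℤ) :
    (ρ.L m : Module.End ℂ V) * ρ.H n - ρ.H n * ρ.L m = (n : ℂ) • ρ.H (m + n) := by
  ext v; exact ρ.rel_LH m n v

lemma gens_comm (ρ : HVRep V) {x y : Module.End ℂ V} (hx : x ∈ ρ.gens) (hy : y ∈ ρ.gens) :
    x * y - y * x ∈ ρ.T := by
  rcases hx with rfl | ⟨m, rfl⟩ | ⟨m, rfl⟩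
  · simp
  · rcases hy with rfl | ⟨n, rfl⟩ | ⟨n, rfl⟩
    · simp
    · rw [LL_eq]
      exact add_mem (smul_mem _ _ (ρ.L_mem_T _)) (smul_mem _ _ ρ.one_mem_T)
    · rw [LH_eq]
      exact smul_mem _ _ (ρ.H_mem_T _)
  · rcases hy with rfl | ⟨n, rfl⟩ | ⟨n, rfl⟩
    · simp
    · rw [← neg_sub, LH_eq]
      exact neg_mem (smul_mem _ _ (ρ.H_mem_T _))
    · rw [HH_eq]
      exact smul_mem _ _ ρ.one_mem_T

lemma T_comm (ρ : HVRep V) {x y : Module.End ℂ V} (hx : x ∈ ρ.T) (hy : y ∈ ρ.T) :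
    x * y - y * x ∈ ρ.T := by
  unfold T at hx hy
  induction hx using Submodule.span_induction with
  | mem x hx =>
    induction hy using Submodule.span_induction with
    | mem y hy => exact ρ.gens_comm hx hy
    | zero => simp
    | add a b _ _ ha hb =>
      have : x * (a + b) - (a + b) * x = (x * a - a * x) + (x * b - b * x) := by noncomm_ring
      rw [this]; exact add_mem ha hb
    | smul c a _ ha =>
      have : x * (c • a) - (c • a) * x = c • (x * a - a * x) := by
        rw [mul_smul_comm, smul_mul_assoc, smul_sub]
      rw [this]; exact smul_mem _ _ ha
  | zero => simp
  | add a b _ _ ha hb =>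
    have : (a + b) * y - y * (a + b) = (a * y - y * a) + (b * y - y * b) := by noncomm_ring
    rw [this]; exact add_mem ha hb
  | smul c a _ ha =>
    have : (c • a) * y - y * (c • a) = c • (a * y - y * a) := by
      rw [mul_smul_comm, smul_mul_assoc, smul_sub]
    rw [this]; exact smul_mem _ _ ha

lemma T_pow_zero (ρ : HVRep V) : ρ.T ^ 0 = 1 := Submodule.pow_zero _

lemma T_pow_one (ρ : HVRep V) : ρ.T ^ 1 = ρ.T := Submodule.pow_one _

lemma T_pow_succ (ρ : HVRep V) (n : ℕ) : ρ.T ^ (n + 1) = ρ.T ^ n * ρ.T := Submodule.pow_succ _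

lemma T_pow_succ' (ρ : HVRep V) (n : ℕ) : ρ.T ^ (n + 1) = ρ.T * ρ.T ^ n :=
  _root_.pow_succ' (M := Submodule ℂ (Module.End ℂ V)) ρ.T n

lemma T_pow_add (ρ : HVRep V) (m n : ℕ) : ρ.T ^ (m + n) = ρ.T ^ m * ρ.T ^ n :=
  _root_.pow_add (M := Submodule ℂ (Module.End ℂ V)) ρ.T m n

lemma T_pow_le_succ (ρ : HVRep V) (n : ℕ) : ρ.T ^ n ≤ ρ.T ^ (n + 1) := by
  intro x hx
  rw [T_pow_succ, ← mul_one x]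
  exact mul_mem_mul hx ρ.one_mem_T

lemma pow_mul_mem (ρ : HVRep V) {a b : ℕ} {x y : Module.End ℂ V} (hx : x ∈ ρ.T ^ a)
    (hy : y ∈ ρ.T ^ b) : x * y ∈ ρ.T ^ (a + b) := by
  rw [ρ.T_pow_add]; exact mul_mem_mul hx hy

lemma T_mono (ρ : HVRep V) {a b : ℕ} (h : a ≤ b) : ρ.T ^ a ≤ ρ.T ^ b :=
  monotone_nat_of_le_succ ρ.T_pow_le_succ h

lemma one_mem_pow (ρ : HVRep V) (n : ℕ) : (1 : Module.End ℂ V) ∈ ρ.T ^ n := by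
  apply ρ.T_mono (Nat.zero_le n)
  rw [T_pow_zero, mem_one]
  exact ⟨1, map_one _⟩

lemma comm_one (ρ : HVRep V) {x : Module.End ℂ V} (hx : x ∈ ρ.T) (b : ℕ) :
    ∀ A ∈ ρ.T ^ b, x * A - A * x ∈ ρ.T ^ b := by
  induction b with
  | zero =>
    intro A hA
    rw [ρ.T_pow_zero, mem_one] at hA
    obtain ⟨c, rfl⟩ := hA
    rw [Algebra.commutes, sub_self]; exact zero_mem _
  | succ b ih =>
    intro A hA
    rw [ρ.T_pow_succ'] at hA
    induction hA using Submodule.mul_induction_on' with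
    | mem_mul_mem y hy A' hA' =>
      have : x * (y * A') - (y * A') * x = (x * y - y * x) * A' + y * (x * A' - A' * x) := by
        noncomm_ring
      rw [this, ρ.T_pow_succ']
      exact add_mem (mul_mem_mul (ρ.T_comm hx hy) hA') (mul_mem_mul hy (ih _ hA'))
    | add a _ b _ ha hb =>
      have : x * (a + b) - (a + b) * x = (x * a - a * x) + (x * b - b * x) := by noncomm_ring
      rw [this]; exact add_mem ha hb

lemma comm_pow (ρ : HVRep V) {b : ℕ} {A : Module.End ℂ V} (hA : A ∈ ρ.T ^ b) (a : ℕ) :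
    ∀ z ∈ ρ.T ^ (a + 1), z * A - A * z ∈ ρ.T ^ (a + b) := by
  induction a with
  | zero =>
    intro z hz
    rw [zero_add, ρ.T_pow_one] at hz
    rw [zero_add]; exact ρ.comm_one hz b A hA
  | succ a ih =>
    intro z hz
    rw [ρ.T_pow_succ'] at hz
    induction hz using Submodule.mul_induction_on' with
    | mem_mul_mem x hx z' hz' =>
      have : (x * z') * A - A * (x * z') = x * (z' * A - A * z') + (x * A - A * x) * z' := by
        noncomm_ring
      rw [this]
      refine add_mem ?_ ?_
      · rw [show a + 1 + b = (a + b) + 1 by ring, ρ.T_pow_succ']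
        exact mul_mem_mul hx (ih _ hz')
      · rw [show a + 1 + b = b + (a + 1) by ring]
        exact ρ.pow_mul_mem (ρ.comm_one hx b A hA) hz'
    | add c _ d _ ha hb =>
      have : (c + d) * A - A * (c + d) = (c * A - A * c) + (d * A - A * d) := by noncomm_ring
      rw [this]; exact add_mem ha hb

/-- The filtration of the module generated by `v`. -/
def F (ρ : HVRep V) (v : V) (n : ℕ) : Submodule ℂ V :=
  (ρ.T ^ n).map (LinearMap.applyₗ (R := ℂ) (M₂ := V) v)

lemma mem_F {ρ : HVRep V} {v w : V} {n : ℕ} : w ∈ ρ.F v n ↔ ∃ z ∈ ρ.T ^ n, z v = w := Iff.rfl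

lemma F_mono (ρ : HVRep V) (v : V) {a b : ℕ} (h : a ≤ b) : ρ.F v a ≤ ρ.F v b :=
  Submodule.map_mono (ρ.T_mono h)

/-- Elements of filtration degree `n + 1` which send `v` to a vector of filtration degree `n`. -/
def I (ρ : HVRep V) (v : V) (n : ℕ) : Submodule ℂ (Module.End ℂ V) :=
  ρ.T ^ (n + 1) ⊓ (ρ.F v n).comap (LinearMap.applyₗ (R := ℂ) (M₂ := V) v)

lemma mem_I {ρ : HVRep V} {v : V} {y : Module.End ℂ V} {n : ℕ} :
    y ∈ ρ.I v n ↔ y ∈ ρ.T ^ (n + 1) ∧ ∃ z ∈ ρ.T ^ n, z v = y v := Iff.rfl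

lemma T_le_I (ρ : HVRep V) (v : V) (n : ℕ) : ρ.T ^ n ≤ ρ.I v n :=
  fun y hy => mem_I.2 ⟨ρ.T_mono (Nat.le_succ n) hy, y, hy, rfl⟩

lemma I_left (ρ : HVRep V) {v : V} {a n k : ℕ} {x y : Module.End ℂ V} (hx : x ∈ ρ.T ^ a)
    (hy : y ∈ ρ.I v n) (hk : k = a + n) : x * y ∈ ρ.I v k := by
  subst hk
  obtain ⟨h1, z, hz, h2⟩ := mem_I.1 hy
  refine mem_I.2 ⟨by rw [add_assoc]; exact ρ.pow_mul_mem hx h1, x * z, ρ.pow_mul_mem hx hz, ?_⟩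
  rw [Module.End.mul_apply, Module.End.mul_apply, h2]

lemma I_right (ρ : HVRep V) {v : V} {n : ℕ} {x y : Module.End ℂ V} (hx : x ∈ ρ.T)
    (hy : y ∈ ρ.I v n) : y * x ∈ ρ.I v (n + 1) := by
  have h1 := (mem_I.1 hy).1
  have : y * x = x * y - (x * y - y * x) := by abel
  rw [this]
  refine sub_mem (ρ.I_left (a := 1) (by rw [T_pow_one]; exact hx) hy (by ring)) ?_
  exact ρ.T_le_I v _ (ρ.comm_one hx _ y h1)

lemma I_comm (ρ : HVRep V) {v : V} {m n : ℕ} {f g : Module.End ℂ V} (hf : f ∈ ρ.I v m)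
    (hg : g ∈ ρ.I v n) : f * g - g * f ∈ ρ.I v (m + n) := by
  obtain ⟨f1, f', hf', f2⟩ := mem_I.1 hf
  obtain ⟨g1, g', hg', g2⟩ := mem_I.1 hg
  refine mem_I.2 ⟨ρ.comm_pow g1 m f f1, (f * g' - g' * f) - (g * f' - f' * g) -
    (f' * g' - g' * f'), ?_, ?_⟩
  · refine sub_mem (sub_mem (ρ.comm_pow hg' m f f1) ?_) ?_
    · rw [add_comm]; exact ρ.comm_pow hf' n g g1
    · refine sub_mem (ρ.pow_mul_mem hf' hg') ?_
      rw [add_comm]; exact ρ.pow_mul_mem hg' hf'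
  · simp only [LinearMap.sub_apply, Module.End.mul_apply, f2, g2]
    abel

/-- If `A₁ k`, `A₂ k` are both good then so is `[z, A₁ A₂] k`. -/
lemma deriv_mem (ρ : HVRep V) {v : V} {r s : ℕ} {A₁ A₂ k z : Module.End ℂ V}
    (h1 : A₁ ∈ ρ.T ^ r) (h2 : A₂ ∈ ρ.T ^ r) (hk : k ∈ ρ.T) (hz : z ∈ ρ.T ^ (s + 1))
    (hr : 0 < r)
    (g1 : A₁ * k ∈ ρ.I v r) (g2 : A₂ * k ∈ ρ.I v r) :
    (z * (A₁ * A₂) - (A₁ * A₂) * z) * k ∈ ρ.I v (2 * r + s) := by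
  obtain ⟨r, rfl⟩ : ∃ r', r = r' + 1 := ⟨r - 1, by omega⟩
  set X₁ := z * A₁ - A₁ * z with hX1
  set X₂ := z * A₂ - A₂ * z with hX2
  have m1 : X₁ ∈ ρ.T ^ (s + (r + 1)) := ρ.comm_pow h1 s z hz
  have m2 : X₂ ∈ ρ.T ^ (s + (r + 1)) := ρ.comm_pow h2 s z hz
  have : (z * (A₁ * A₂) - (A₁ * A₂) * z) * k =
      X₁ * (A₂ * k) + X₂ * (A₁ * k) + (A₁ * X₂ - X₂ * A₁) * k := by
    rw [hX1, hX2]; noncomm_ring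
  rw [this]
  refine add_mem (add_mem (ρ.I_left m1 g2 (by ring)) (ρ.I_left m2 g1 (by ring))) ?_
  apply ρ.T_le_I
  have h3 := ρ.comm_pow m2 r A₁ h1
  have h4 := ρ.pow_mul_mem (b := 1) h3 (by rw [T_pow_one]; exact hk)
  exact ρ.T_mono (by omega) h4

lemma key (ρ : HVRep V) {v : V} {r : ℕ} {P₁ P₂ Q₁ Q₂ l k : Module.End ℂ V} (hr : 0 < r)
    (p1 : P₁ ∈ ρ.T ^ r) (p2 : P₂ ∈ ρ.T ^ r) (q1 : Q₁ ∈ ρ.T ^ r) (q2 : Q₂ ∈ ρ.T ^ r)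
    (hl : l ∈ ρ.T) (hk : k ∈ ρ.T)
    (g1 : P₁ * l ∈ ρ.I v r) (g2 : P₂ * l ∈ ρ.I v r)
    (g3 : Q₁ * k ∈ ρ.I v r) (g4 : Q₂ * k ∈ ρ.I v r) :
    P₁ * P₂ * (Q₁ * Q₂) * (l * k - k * l) ∈ ρ.I v (4 * r) := by
  have hP : P₁ * P₂ ∈ ρ.T ^ (r + r) := ρ.pow_mul_mem p1 p2
  have hQ : Q₁ * Q₂ ∈ ρ.T ^ (r + r) := ρ.pow_mul_mem q1 q2
  have hf : P₁ * P₂ * l ∈ ρ.I v (r + r) := by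
    rw [mul_assoc]; exact ρ.I_left p1 g2 rfl
  have hg : Q₁ * Q₂ * k ∈ ρ.I v (r + r) := by
    rw [mul_assoc]; exact ρ.I_left q1 g4 rfl
  have hc := ρ.I_comm hf hg
  have e1 : (l * (Q₁ * Q₂) - (Q₁ * Q₂) * l) * k ∈ ρ.I v (2 * r + 0) :=
    ρ.deriv_mem q1 q2 hk (by rw [zero_add, T_pow_one]; exact hl) hr g3 g4
  have e2 : (k * (P₁ * P₂) - (P₁ * P₂) * k) * l ∈ ρ.I v (2 * r + 0) :=
    ρ.deriv_mem p1 p2 hl (by rw [zero_add, T_pow_one]; exact hk) hr g1 g2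
  have e3 : (P₁ * P₂ * (Q₁ * Q₂) - (Q₁ * Q₂) * (P₁ * P₂)) * k ∈ ρ.I v (2 * r + (r + r - 1)) :=
    ρ.deriv_mem q1 q2 hk (by rw [Nat.sub_add_cancel (by omega)]; exact hP) hr g3 g4
  have e3' := ρ.I_right hl e3
  have e1' := ρ.I_left hP e1 (k := 4 * r) (by ring)
  have e2' := ρ.I_left hQ e2 (k := 4 * r) (by ring)
  rw [show 2 * r + (r + r - 1) + 1 = 4 * r by omega] at e3'
  rw [show r + r + (r + r) = 4 * r by ring] at hc
  have : P₁ * P₂ * (Q₁ * Q₂) * (l * k - k * l) =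
      (P₁ * P₂ * l * (Q₁ * Q₂ * k) - Q₁ * Q₂ * k * (P₁ * P₂ * l))
      - P₁ * P₂ * ((l * (Q₁ * Q₂) - (Q₁ * Q₂) * l) * k)
      + Q₁ * Q₂ * ((k * (P₁ * P₂) - (P₁ * P₂) * k) * l)
      - (P₁ * P₂ * (Q₁ * Q₂) - (Q₁ * Q₂) * (P₁ * P₂)) * k * l := by
    generalize P₁ * P₂ = P
    generalize Q₁ * Q₂ = Q
    noncomm_ring
  rw [this]
  exact sub_mem (add_mem (sub_mem hc e1') e2') e3'

/-- Homogeneous operators of weight `w`. -/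
def Hom (ρ : HVRep V) (w : ℤ) (z : Module.End ℂ V) : Prop :=
  ∀ μ : ℂ, ∀ u ∈ ρ.wt μ, z u ∈ ρ.wt (μ + w)

lemma mem_wt {ρ : HVRep V} {μ : ℂ} {u : V} : u ∈ ρ.wt μ ↔ ρ.L 0 u = μ • u :=
  Module.End.mem_eigenspace_iff

lemma Hom.mul {ρ : HVRep V} {w w' : ℤ} {z z' : Module.End ℂ V} (h : ρ.Hom w z)
    (h' : ρ.Hom w' z') : ρ.Hom (w + w') (z * z') := by
  intro μ u hu
  have := h _ _ (h' _ _ hu)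
  rw [Module.End.mul_apply]
  convert this using 2
  push_cast; ring

lemma Hom_one (ρ : HVRep V) : ρ.Hom 0 1 := by
  intro μ u hu; simpa using hu

lemma Hom_L (ρ : HVRep V) (n : ℤ) : ρ.Hom n (ρ.L n) := by
  intro μ u hu
  rw [mem_wt] at hu ⊢
  have h := ρ.rel_LL 0 n u
  have h0 : ((1 / 12 : ℂ) * ((n : ℂ) ^ 3 - (n : ℂ)) *
          (if 0 + n = 0 then (1 : ℂ) else 0) * ρ.c₀) = 0 := by
    by_cases hn : n = 0 <;> simp [hn]
  rw [h0, hu, map_smul, zero_add, zero_smul, add_zero, sub_eq_iff_eq_add] at h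
  rw [h]; simp [add_smul, add_comm]

lemma Hom_H (ρ : HVRep V) (n : ℤ) : ρ.Hom n (ρ.H n) := by
  intro μ u hu
  rw [mem_wt] at hu ⊢
  have h := ρ.rel_LH 0 n u
  rw [hu, map_smul, zero_add, sub_eq_iff_eq_add] at h
  rw [h]; simp [add_smul, add_comm]

lemma gens_Hom (ρ : HVRep V) {z : Module.End ℂ V} (hz : z ∈ ρ.gens) : ∃ w, ρ.Hom w z := by
  rcases hz with rfl | ⟨m, rfl⟩ | ⟨m, rfl⟩
  exacts [⟨0, ρ.Hom_one⟩, ⟨m, ρ.Hom_L m⟩, ⟨m, ρ.Hom_H m⟩]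

lemma chain (ρ : HVRep V) (r : ℕ) : ∀ B ∈ ρ.gens ^ r, ∃ (P : ℕ → Module.End ℂ V) (w : ℕ → ℤ),
    P r = B ∧ ∀ i ≤ r, P i ∈ ρ.T ^ i ∧ ρ.Hom (w i) (P i) ∧ ∃ Q ∈ ρ.T ^ (r - i), B = Q * P i := by
  induction r with
  | zero =>
    intro B hB
    rw [_root_.pow_zero, Set.mem_one] at hB
    subst hB
    refine ⟨fun _ => 1, fun _ => 0, rfl, fun i hi => ⟨?_, ρ.Hom_one, 1, ?_, by simp⟩⟩
    · exact ρ.one_mem_pow _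
    · exact ρ.one_mem_pow _
  | succ r ih =>
    intro B hB
    rw [_root_.pow_succ'] at hB
    obtain ⟨z, hz, B', hB', rfl⟩ := Set.mem_mul.1 hB
    obtain ⟨P, w, hP, h⟩ := ih B' hB'
    obtain ⟨wz, hwz⟩ := ρ.gens_Hom hz
    have hzT : z ∈ ρ.T := subset_span hz
    refine ⟨fun i => if i ≤ r then P i else z * B', fun i => if i ≤ r then w i else wz + w r,
      by simp, ?_⟩
    intro i hi
    by_cases hir : i ≤ r
    · simp only [hir, if_true]
      obtain ⟨h1, h2, Q, hQ, h3⟩ := h i hir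
      refine ⟨h1, h2, z * Q, ?_, by rw [mul_assoc, ← h3]⟩
      rw [Nat.sub_add_comm hir, ρ.T_pow_succ']
      exact mul_mem_mul hzT hQ
    · obtain rfl : i = r + 1 := by omega
      obtain ⟨h1, h2, -⟩ := h r le_rfl
      rw [hP] at h1 h2
      simp only [hir, if_false]
      refine ⟨?_, hwz.mul h2, 1, ?_, by simp⟩
      · rw [ρ.T_pow_succ']; exact mul_mem_mul hzT h1
      · exact ρ.one_mem_pow _

/-- Vectors in distinct filtration layers of a space of dimension at most `p`. -/
lemma card_le (Φ : ℕ → Submodule ℂ V) (hΦ : Monotone Φ) (E : Submodule ℂ V) (p : ℕ)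
    (hE : Module.rank ℂ E ≤ (p : Cardinal)) (e : ℕ → V) (A : Finset ℕ)
    (h : ∀ i ∈ A, e i ∈ E ∧ e i ∈ Φ (i + 1) ∧ e i ∉ Φ i) : A.card ≤ p := by
  have hind : ∀ A : Finset ℕ, (∀ i ∈ A, e i ∈ Φ (i + 1) ∧ e i ∉ Φ i) →
      LinearIndepOn ℂ e (A : Set ℕ) := by
    intro A
    induction A using Finset.induction_on_max with
    | empty => intro _; simp
    | insert a s hs ih =>
      intro hA
      rw [Finset.coe_insert]
      refine (ih fun i hi => hA i (Finset.mem_insert_of_mem hi)).insert ?_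
      intro hmem
      apply (hA a (Finset.mem_insert_self _ _)).2
      refine (span_le.2 ?_) hmem
      rintro _ ⟨i, hi, rfl⟩
      exact hΦ (hs i hi) (hA i (Finset.mem_insert_of_mem hi)).1
  have hi := hind A fun i hi => (h i hi).2
  have hli : LinearIndependent ℂ (fun i : A => (⟨e i, (h i i.2).1⟩ : E)) := by
    apply LinearIndependent.of_comp E.subtype
    exact hi
  have := hli.cardinal_le_rank.trans hE
  simpa using this

/-- Density estimate. -/
lemma density (p r : ℕ) (w : ℕ → ℤ) (S : Set ℤ) [DecidablePred (· ∈ S)]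
    (h : ∀ N : ℤ, ((Finset.range r).filter (fun i => N - w i ∈ S)).card ≤ p) :
    ∃ C : ℕ, ∀ Λ : ℕ,
      r * ((Finset.Ico (0 : ℤ) Λ).filter (· ∈ S)).card ≤ p * Λ + C := by
  refine ⟨∑ i ∈ Finset.range r, (w i).natAbs, fun Λ => ?_⟩
  have h1 : ∀ i, ((Finset.Ico (0 : ℤ) Λ).filter (· ∈ S)).card ≤
      ((Finset.Ico (0 : ℤ) Λ).filter (fun N => N - w i ∈ S)).card + (w i).natAbs := by
    intro i
    have hsub : ((Finset.Ico (0 : ℤ) Λ).filter (· ∈ S)).image (fun b => b + w i) ⊆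
        ((Finset.Ico (0 : ℤ) Λ).filter (fun N => N - w i ∈ S)) ∪
          (if 0 ≤ w i then Finset.Ico (Λ : ℤ) (Λ + w i) else Finset.Ico (w i) 0) := by
      intro N hN
      simp only [Finset.mem_image, Finset.mem_filter, Finset.mem_Ico] at hN
      obtain ⟨b, ⟨⟨hb0, hb1⟩, hb2⟩, rfl⟩ := hN
      simp only [Finset.mem_union, Finset.mem_filter, Finset.mem_Ico, add_sub_cancel_right]
      by_cases hc : 0 ≤ b + w i ∧ b + w i < Λ
      · exact Or.inl ⟨hc, hb2⟩
      · right
        split_ifs with hw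
        · rw [Finset.mem_Ico]; omega
        · rw [Finset.mem_Ico]; omega
    have h2 := Finset.card_le_card hsub
    rw [Finset.card_image_of_injective _ (add_left_injective (w i))] at h2
    refine h2.trans ((Finset.card_union_le _ _).trans ?_)
    gcongr
    split_ifs with hw <;> rw [Int.card_Ico] <;> omega
  calc r * ((Finset.Ico (0 : ℤ) Λ).filter (· ∈ S)).card
      = ∑ i ∈ Finset.range r, ((Finset.Ico (0 : ℤ) Λ).filter (· ∈ S)).card := by simp
    _ ≤ ∑ i ∈ Finset.range r, (((Finset.Ico (0 : ℤ) Λ).filter (fun N => N - w i ∈ S)).card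
          + (w i).natAbs) := Finset.sum_le_sum fun i _ => h1 i
    _ = ∑ N ∈ Finset.Ico (0 : ℤ) Λ, ((Finset.range r).filter (fun i => N - w i ∈ S)).card
          + ∑ i ∈ Finset.range r, (w i).natAbs := by
        rw [Finset.sum_add_distrib]
        congr 1
        exact Finset.sum_card_bipartiteAbove_eq_sum_card_bipartiteBelow (fun i N => N - w i ∈ S)
    _ ≤ ∑ N ∈ Finset.Ico (0 : ℤ) Λ, p + ∑ i ∈ Finset.range r, (w i).natAbs := by
        gcongr with N _; exact h N
    _ = _ := by simp [mul_comm]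

/-- Set-theoretic consequence: four sparse sets and a point do not cover `ℤ`. -/
lemma avoid (p r : ℕ) (hr : 4 * p < r) (w : Fin 4 → ℕ → ℤ) (S : Fin 4 → Set ℤ)
    (h : ∀ j, ∀ N : ℤ, ∀ A : Finset ℕ, (∀ i ∈ A, i < r ∧ N - w j i ∈ S j) → A.card ≤ p)
    (x : ℤ) : ∃ b : ℤ, b ≠ x ∧ ∀ j, b ∉ S j := by
  classical
  have hd : ∀ j, ∃ C : ℕ, ∀ Λ : ℕ,
      r * ((Finset.Ico (0 : ℤ) Λ).filter (· ∈ S j)).card ≤ p * Λ + C := by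
    intro j
    apply density p r (w j) (S j)
    intro N
    apply h j N
    intro i hi
    simpa using hi
  choose C hC using hd
  by_contra! hcon
  set Λ := (∑ j, C j) + r + 1 with hΛ
  have hsub : Finset.Ico (0 : ℤ) Λ ⊆
      {x} ∪ Finset.univ.biUnion (fun j => (Finset.Ico (0 : ℤ) Λ).filter (· ∈ S j)) := by
    intro b hb
    by_cases hx : b = x
    · simp [hx]
    · obtain ⟨j, hj⟩ := hcon b hx
      apply Finset.mem_union_right
      rw [Finset.mem_biUnion]
      exact ⟨j, Finset.mem_univ _, Finset.mem_filter.2 ⟨hb, hj⟩⟩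
  have h1 := (Finset.card_le_card hsub).trans ((Finset.card_union_le _ _).trans
    (Nat.add_le_add_left Finset.card_biUnion_le _))
  rw [Int.card_Ico, Finset.card_singleton, sub_zero, Int.toNat_natCast] at h1
  have h2 : r * Λ ≤ r + ∑ j, (p * Λ + C j) := by
    calc r * Λ ≤ r * (1 + ∑ j, ((Finset.Ico (0 : ℤ) Λ).filter (· ∈ S j)).card) := by gcongr
      _ = r + ∑ j, r * ((Finset.Ico (0 : ℤ) Λ).filter (· ∈ S j)).card := by
        rw [mul_add, mul_one, Finset.mul_sum]
      _ ≤ _ := by gcongr with j _; exact hC j Λ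
  rw [Finset.sum_add_distrib, Finset.sum_const, Finset.card_univ, Fintype.card_fin,
    smul_eq_mul] at h2
  nlinarith

/-- For a block `B`, the set of bad `b` is sparse. -/
lemma block (ρ : HVRep V) (p : ℕ) (hp : ∀ μ : ℂ, Module.rank ℂ ↥(ρ.wt μ) ≤ (p : Cardinal))
    {μ : ℂ} {v : V} (hv : v ∈ ρ.wt μ) (X : ℤ → Module.End ℂ V) (hX : ∀ n, X n ∈ ρ.T)
    (hX' : ∀ n, ρ.Hom n (X n)) {r : ℕ} {B : Module.End ℂ V} (hB : B ∈ ρ.gens ^ r) :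
    ∃ w : ℕ → ℤ, ∀ N : ℤ, ∀ A : Finset ℕ,
      (∀ i ∈ A, i < r ∧ B * X (N - w i) ∉ ρ.I v r) → A.card ≤ p := by
  obtain ⟨P, w, -, h⟩ := ρ.chain r B hB
  refine ⟨w, fun N A hA => ?_⟩
  refine card_le (ρ.F v) (fun a b hab => ρ.F_mono v hab) (ρ.wt (μ + N)) p (hp _)
    (fun i => (P i * X (N - w i)) v) A fun i hi => ?_
  obtain ⟨hir, hbad⟩ := hA i hi
  obtain ⟨h1, h2, Q, hQ, h3⟩ := h i hir.le
  have hT : P i * X (N - w i) ∈ ρ.T ^ (i + 1) := by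
    rw [ρ.T_pow_succ]; exact mul_mem_mul h1 (hX _)
  refine ⟨?_, mem_F.2 ⟨_, hT, rfl⟩, fun hF => hbad ?_⟩
  · have := (h2.mul (hX' (N - w i))) μ v hv
    rwa [add_sub_cancel] at this
  · rw [h3, mul_assoc]
    exact ρ.I_left hQ (mem_I.2 ⟨hT, hF⟩) (by omega)

lemma four (ρ : HVRep V) (p : ℕ) (hp : ∀ μ : ℂ, Module.rank ℂ ↥(ρ.wt μ) ≤ (p : Cardinal))
    {μ : ℂ} {v : V} (hv : v ∈ ρ.wt μ) (X : ℤ → Module.End ℂ V) (hX : ∀ n, X n ∈ ρ.T)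
    (hX' : ∀ n, ρ.Hom n (X n)) {r : ℕ} (hr : 4 * p < r) {B₁ B₂ B₃ B₄ : Module.End ℂ V}
    (h1 : B₁ ∈ ρ.gens ^ r) (h2 : B₂ ∈ ρ.gens ^ r) (h3 : B₃ ∈ ρ.gens ^ r)
    (h4 : B₄ ∈ ρ.gens ^ r) (a x : ℤ) :
    ∃ b : ℤ, b ≠ x ∧
      B₁ * B₂ * (B₃ * B₄) * (ρ.L b * X (a - b) - X (a - b) * ρ.L b) ∈ ρ.I v (4 * r) := by
  have hT : ∀ B ∈ ρ.gens ^ r, B ∈ ρ.T ^ r := fun B hB => by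
    unfold T; rw [span_pow]; exact subset_span hB
  obtain ⟨w1, hw1⟩ := ρ.block p hp hv ρ.L ρ.L_mem_T ρ.Hom_L h1
  obtain ⟨w2, hw2⟩ := ρ.block p hp hv ρ.L ρ.L_mem_T ρ.Hom_L h2
  obtain ⟨w3, hw3⟩ := ρ.block p hp hv X hX hX' h3
  obtain ⟨w4, hw4⟩ := ρ.block p hp hv X hX hX' h4
  obtain ⟨b, hb, hS⟩ := avoid p r hr ![w1, w2, -w3, -w4]
    ![{b | B₁ * ρ.L b ∉ ρ.I v r}, {b | B₂ * ρ.L b ∉ ρ.I v r},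
      {b | B₃ * X (a - b) ∉ ρ.I v r}, {b | B₄ * X (a - b) ∉ ρ.I v r}] (by
    intro j N A hA
    fin_cases j
    · exact hw1 N A hA
    · exact hw2 N A hA
    · refine hw3 (a - N) A fun i hi => ⟨(hA i hi).1, ?_⟩
      have := (hA i hi).2
      simp only [Fin.reduceFinMk, Matrix.cons_val, Pi.neg_apply, Set.mem_ofPred_eq] at this
      rwa [show a - (N - -w3 i) = a - N - w3 i by ring] at this
    · refine hw4 (a - N) A fun i hi => ⟨(hA i hi).1, ?_⟩
      have := (hA i hi).2
      simp only [Fin.reduceFinMk, Matrix.cons_val, Pi.neg_apply, Set.mem_ofPred_eq] at this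
      rwa [show a - (N - -w4 i) = a - N - w4 i by ring] at this) x
  refine ⟨b, hb, ρ.key (by omega) (hT _ h1) (hT _ h2) (hT _ h3) (hT _ h4) (ρ.L_mem_T b) (hX _)
    ?_ ?_ ?_ ?_⟩
  · simpa using hS 0
  · simpa using hS 1
  · simpa using hS 2
  · simpa using hS 3

lemma gens_good (ρ : HVRep V) (p : ℕ)
    (hp : ∀ μ : ℂ, Module.rank ℂ ↥(ρ.wt μ) ≤ (p : Cardinal))
    {μ : ℂ} {v : V} (hv : v ∈ ρ.wt μ) {r : ℕ} (hr : 4 * p < r)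
    {B₁ B₂ B₃ B₄ y : Module.End ℂ V}
    (h1 : B₁ ∈ ρ.gens ^ r) (h2 : B₂ ∈ ρ.gens ^ r) (h3 : B₃ ∈ ρ.gens ^ r)
    (h4 : B₄ ∈ ρ.gens ^ r) (hy : y ∈ ρ.gens) :
    B₁ * B₂ * (B₃ * B₄) * y ∈ ρ.I v (4 * r) := by
  have hT : ∀ B ∈ ρ.gens ^ r, B ∈ ρ.T ^ r := fun B hB => by
    unfold T; rw [span_pow]; exact subset_span hB
  have hM : B₁ * B₂ * (B₃ * B₄) ∈ ρ.T ^ (4 * r) := by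
    rw [show 4 * r = (r + r) + (r + r) by ring]
    exact ρ.pow_mul_mem (ρ.pow_mul_mem (hT _ h1) (hT _ h2)) (ρ.pow_mul_mem (hT _ h3) (hT _ h4))
  set M := B₁ * B₂ * (B₃ * B₄) with hMdef
  rcases hy with rfl | ⟨a, rfl⟩ | ⟨a, rfl⟩
  · rw [mul_one]; exact ρ.T_le_I v _ hM
  · obtain ⟨b, hb, h⟩ : ∃ b : ℤ, ((a - b : ℤ) : ℂ) - b ≠ 0 ∧
        M * (ρ.L b * ρ.L (a - b) - ρ.L (a - b) * ρ.L b) ∈ ρ.I v (4 * r) := by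
      rcases Int.even_or_odd' a with ⟨a', ha | ha⟩
      · obtain ⟨b, hb, h⟩ := ρ.four p hp hv ρ.L ρ.L_mem_T ρ.Hom_L hr h1 h2 h3 h4 a a'
        refine ⟨b, ?_, h⟩
        have : a - b - b ≠ 0 := by omega
        exact_mod_cast this
      · obtain ⟨b, hb, h⟩ := ρ.four p hp hv ρ.L ρ.L_mem_T ρ.Hom_L hr h1 h2 h3 h4 a a'
        refine ⟨b, ?_, h⟩
        have : a - b - b ≠ 0 := by omega
        exact_mod_cast this
    rw [LL_eq, add_sub_cancel, mul_add, mul_smul_comm, mul_smul_comm, mul_one] at h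
    have h' := (Submodule.add_mem_iff_left _ (smul_mem _ _ (ρ.T_le_I v _ hM))).1 h
    exact (smul_mem_iff _ hb).1 h'
  · obtain ⟨b, hb, h⟩ := ρ.four p hp hv ρ.H ρ.H_mem_T ρ.Hom_H hr h1 h2 h3 h4 a a
    rw [LH_eq, add_sub_cancel, mul_smul_comm] at h
    refine (smul_mem_iff _ ?_).1 h
    have : a - b ≠ 0 := by omega
    exact_mod_cast this

lemma T_good (ρ : HVRep V) (p : ℕ)
    (hp : ∀ μ : ℂ, Module.rank ℂ ↥(ρ.wt μ) ≤ (p : Cardinal))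
    {μ : ℂ} {v : V} (hv : v ∈ ρ.wt μ) {r : ℕ} (hr : 4 * p < r) :
    ρ.T ^ (4 * r + 1) ≤ ρ.I v (4 * r) := by
  have : ρ.T ^ (4 * r + 1) = ρ.T ^ r * ρ.T ^ r * (ρ.T ^ r * ρ.T ^ r) * ρ.T := by
    rw [← ρ.T_pow_add, ← ρ.T_pow_add, ← ρ.T_pow_succ]; congr 1; ring
  rw [this]
  unfold T
  rw [span_pow, span_mul_span, span_mul_span, span_mul_span, span_le]
  rintro _ ⟨_, ⟨_, ⟨B₁, h1, B₂, h2, rfl⟩, _, ⟨B₃, h3, B₄, h4, rfl⟩, rfl⟩, y, hy, rfl⟩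
  exact ρ.gens_good p hp hv hr h1 h2 h3 h4 hy

lemma F_stable (ρ : HVRep V) {v : V} {n : ℕ} (h : ρ.T ^ (n + 1) ≤ ρ.I v n) (k : ℕ) :
    ∀ z ∈ ρ.T ^ k, z v ∈ ρ.F v n := by
  induction k with
  | zero => intro z hz; exact ρ.F_mono v (Nat.zero_le n) (mem_F.2 ⟨z, hz, rfl⟩)
  | succ k ih =>
    intro z hz
    rw [ρ.T_pow_succ'] at hz
    induction hz using Submodule.mul_induction_on' with
    | mem_mul_mem x hx z' hz' =>
      obtain ⟨y, hy, hyv⟩ := mem_F.1 (ih z' hz')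
      have h1 : x * y ∈ ρ.T ^ (n + 1) := by rw [ρ.T_pow_succ']; exact mul_mem_mul hx hy
      have := (mem_I.1 (h h1)).2
      rw [Module.End.mul_apply, hyv] at this
      exact this
    | add a _ b _ ha hb => rw [LinearMap.add_apply]; exact add_mem ha hb

lemma tpow_mem (ρ : HVRep V) (v : V) (k : ℕ) :
    ∀ w ∈ ρ.tpow k {v}, ∃ z ∈ ρ.T ^ k, z v = w := by
  induction k with
  | zero =>
    intro w hw
    obtain rfl : w = v := hw
    exact ⟨1, ρ.one_mem_pow _, rfl⟩
  | succ k ih =>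
    rintro w ⟨x, hx, u, hu, rfl⟩
    obtain ⟨z, hz, rfl⟩ := ih u hu
    refine ⟨x * z, ?_, rfl⟩
    rw [ρ.T_pow_succ']
    exact mul_mem_mul (subset_span (Set.mem_insert_of_mem _ hx)) hz

lemma F_le (ρ : HVRep V) {μ : ℂ} (hμ : μ ≠ 0) {v : V} (hv : v ∈ ρ.wt μ) (n : ℕ) :
    ∀ z ∈ ρ.T ^ n, z v ∈ Submodule.span ℂ (⋃ k ∈ Finset.Icc 1 (n + 1), ρ.tpow k {v}) := by
  induction n with
  | zero =>
    intro z hz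
    rw [ρ.T_pow_zero, mem_one] at hz
    obtain ⟨c, rfl⟩ := hz
    have h1 : ρ.L 0 v ∈ Submodule.span ℂ (⋃ k ∈ Finset.Icc 1 (0 + 1), ρ.tpow k {v}) := by
      apply subset_span
      simp only [Set.mem_iUnion]
      exact ⟨1, by simp, ρ.L 0, Or.inl ⟨0, rfl⟩, v, rfl, rfl⟩
    rw [mem_wt.1 hv] at h1
    rw [Module.algebraMap_end_apply]
    exact smul_mem _ _ ((smul_mem_iff _ hμ).1 h1)
  | succ n ih =>
    intro z hz
    rw [ρ.T_pow_succ'] at hz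
    induction hz using Submodule.mul_induction_on' with
    | mem_mul_mem x hx z' hz' =>
      rw [Module.End.mul_apply]
      have hu := ih z' hz'
      generalize z' v = u at hu
      unfold T at hx
      induction hx using Submodule.span_induction with
      | zero => simp
      | add a b _ _ ha hb => rw [LinearMap.add_apply]; exact add_mem ha hb
      | smul c a _ ha => rw [LinearMap.smul_apply]; exact smul_mem _ _ ha
      | mem x hx =>
        induction hu using Submodule.span_induction with
        | zero => simp
        | add a b _ _ ha hb => rw [map_add]; exact add_mem ha hb
        | smul c a _ ha => rw [map_smul]; exact smul_mem _ _ ha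
        | mem u hu =>
          simp only [Set.mem_iUnion, Finset.mem_Icc] at hu
          obtain ⟨k, ⟨hk1, hk2⟩, hu⟩ := hu
          apply subset_span
          simp only [Set.mem_iUnion, Finset.mem_Icc]
          rcases hx with rfl | hx
          · exact ⟨k, ⟨hk1, by omega⟩, hu⟩
          · exact ⟨k + 1, ⟨by omega, by omega⟩, x, hx, u, hu, rfl⟩
    | add a _ b _ ha hb => rw [LinearMap.add_apply]; exact add_mem ha hb

end HVRep

/-- Lemma 3.1 of the paper. If `V` is a cuspidal weight `𝔱`-module
with no trivial `𝔱`-vector, then there is `m ∈ ℤ₊` such that for every nonzero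
weight vector `v` of nonzero weight, every simple `𝔱`-submodule `V'` of `U(𝔱)v`
satisfies `V' ⊆ Σ_{1 ≤ k ≤ m} 𝔱^k v`. -/
theorem stmt4 {V : Type} [AddCommGroup V] [Module ℂ V] (ρ : HVRep V)
    (hweight : ρ.IsWeight) (hcusp : ρ.Cuspidal)
    (hnotriv : ¬ ∃ v : V, v ≠ 0 ∧ ∀ m : ℤ, ρ.L m v = 0 ∧ ρ.H m v = 0) :
    ∃ m : ℕ, 0 < m ∧ ∀ μ : ℂ, μ ≠ 0 → ∀ v ∈ ρ.wt μ, v ≠ 0 →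
      ∀ V' : Submodule ℂ V, ρ.IsSimpleSubmod V' → V' ≤ ρ.genBy v →
        V' ≤ Submodule.span ℂ (⋃ k ∈ Finset.Icc 1 m, ρ.tpow k {v}) := by
  obtain ⟨-, p, hp⟩ := hcusp
  refine ⟨4 * (4 * p + 1) + 1, by omega, ?_⟩
  intro μ hμ v hv _ V' _ hle
  refine hle.trans (Submodule.span_le.2 ?_)
  intro w hw
  obtain ⟨k, hk⟩ := Set.mem_iUnion.1 hw
  obtain ⟨z, hz, rfl⟩ := ρ.tpow_mem v k w hk
  obtain ⟨y, hy, hyz⟩ := HVRep.mem_F.1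
    (ρ.F_stable (ρ.T_good p hp hv (r := 4 * p + 1) (by omega)) k z hz)
  rw [← hyz]
  exact ρ.F_le hμ hv _ y hy
end

section
/- Let V be a cuspidal weight module over the Virasoro algebra Vir which contains no trivial Vir-vector. Then there exists a positive integer m such that for every nonzero weight vector v whose weight (L₀-eigenvalue) is nonzero, every simple Vir-submodule V′ of the Vir-submodule generated by v satisfies V′ ⊆ Σ_{k=1}^m Vir^k v. -/
open Submodule

/-- A module over the Virasoro algebra `Vir`: a complex vector space with
operators `L m` and a scalar `c₀` (the action of the central element `C`)
realizing the defining brackets as commutators. -/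
structure VirRep (V : Type) [AddCommGroup V] [Module ℂ V] : Type where
  L : ℤ → V →ₗ[ℂ] V
  c₀ : ℂ
  rel_LL : ∀ (m n : ℤ) (v : V),
    L m (L n v) - L n (L m v) =
      ((n : ℂ) - (m : ℂ)) • L (m + n) v +
        ((1 / 12 : ℂ) * ((n : ℂ) ^ 3 - (n : ℂ)) *
          (if m + n = 0 then (1 : ℂ) else 0) * c₀) • v

namespace VirRep

variable {V : Type} [AddCommGroup V] [Module ℂ V]

/-- The weight space `V_μ = {v ∈ V : L₀ v = μ v}`. -/
def wt (ρ : VirRep V) (μ : ℂ) : Submodule ℂ V :=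
  Module.End.eigenspace (ρ.L 0) μ

/-- `V` is a weight module: it is the sum of its weight spaces. -/
def IsWeight (ρ : VirRep V) : Prop := (⨆ μ : ℂ, ρ.wt μ) = ⊤

/-- `V` is cuspidal: a weight module with uniformly bounded weight multiplicities. -/
def Cuspidal (ρ : VirRep V) : Prop :=
  ρ.IsWeight ∧ ∃ p : ℕ, ∀ μ : ℂ, Module.rank ℂ ↥(ρ.wt μ) ≤ (p : Cardinal)

/-- A subspace invariant under all the operators. -/
def IsSubmod (ρ : VirRep V) (W : Submodule ℂ V) : Prop :=
  ∀ (m : ℤ), ∀ v ∈ W, ρ.L m v ∈ W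

/-- `virpow k S`: the set of all vectors `x₁ x₂ ⋯ x_k v` with `x_j ∈ {L_n}` and
`v ∈ S`; so `virpow k {v}` is the set `Vir^k v` of the paper. -/
def virpow (ρ : VirRep V) : ℕ → Set V → Set V
  | 0, S => S
  | k + 1, S => {w | ∃ n : ℤ, ∃ u ∈ ρ.virpow k S, w = ρ.L n u}

/-- The `Vir`-submodule `U(Vir) v` generated by `v`. -/
def genBy (ρ : VirRep V) (v : V) : Submodule ℂ V :=
  Submodule.span ℂ (⋃ k : ℕ, ρ.virpow k {v})

/-- A nonzero invariant subspace which is a simple (nontrivial, with no invariant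
subspaces other than `0` and itself) `Vir`-module. -/
def IsSimpleSubmod (ρ : VirRep V) (W : Submodule ℂ V) : Prop :=
  ρ.IsSubmod W ∧ (¬ ∀ (m : ℤ), ∀ v ∈ W, ρ.L m v = 0) ∧
    ∀ U : Submodule ℂ V, ρ.IsSubmod U → U ≤ W → U = ⊥ ∨ U = W

end VirRep

namespace VirAux
open MvPolynomial

/-- The derivation `ad L_a` on the symmetric algebra. -/
noncomputable def del (a : ℤ) : Derivation ℂ (MvPolynomial ℤ ℂ) (MvPolynomial ℤ ℂ) :=
  mkDerivation ℂ (fun j => ((j : ℂ) - (a : ℂ)) • X (a + j))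

lemma del_X (a j : ℤ) : del a (X j) = ((j : ℂ) - (a : ℂ)) • X (a + j) := by
  simp [del, mkDerivation_X]

/-- Symbol of the Casimir element. -/
noncomputable def q : MvPolynomial ℤ ℂ := X 0 * X 0 - X (-1) * X 1

def Stable (J : Ideal (MvPolynomial ℤ ℂ)) : Prop := ∀ a, ∀ f ∈ J, del a f ∈ J

lemma ritt_aux (J : Ideal (MvPolynomial ℤ ℂ)) (hJ : Stable J) (a : ℤ) (f : MvPolynomial ℤ ℂ) :
    ∀ t s : ℕ, f ^ t * (del a f) ^ (2 * s) ∈ J → (del a f) ^ (2 * (s + t)) ∈ J := by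
  intro t
  induction t with
  | zero => intro s h; simpa using h
  | succ t ih =>
    intro s h
    have h1 := J.mul_mem_right (del a f) (hJ a _ h)
    have h2 : (del a f) * del a (f ^ (t + 1) * (del a f) ^ (2 * s)) =
        C ((t : ℂ) + 1) * (f ^ t * (del a f) ^ (2 * (s + 1))) +
        (C (2 * s : ℂ) * del a (del a f)) * (f ^ (t + 1) * (del a f) ^ (2 * s)) := by
      rcases s with _ | s
      · simp [Derivation.leibniz, Derivation.leibniz_pow]
        ring
      · have : 2 * (s + 1) - 1 = 2 * s + 1 := by omega
        simp only [Derivation.leibniz, Derivation.leibniz_pow, smul_eq_mul, nsmul_eq_mul, this]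
        simp only [Nat.cast_add, Nat.cast_mul, Nat.cast_one, Nat.cast_ofNat, map_add, map_mul, map_one, map_natCast, map_ofNat, Nat.add_sub_cancel]
        ring
    have h3 : C ((t : ℂ) + 1) * (f ^ t * (del a f) ^ (2 * (s + 1))) ∈ J := by
      rw [mul_comm, h2] at h1
      exact (J.add_mem_iff_left (J.mul_mem_left _ h)).1 h1
    have h4 : f ^ t * (del a f) ^ (2 * (s + 1)) ∈ J := by
      have := J.mul_mem_left (C (((t : ℂ) + 1)⁻¹)) h3
      rwa [← mul_assoc, ← C_mul, inv_mul_cancel₀ (by exact_mod_cast Nat.succ_ne_zero t), C_1,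
        one_mul] at this
    have := ih (s + 1) h4
    convert this using 2
    ring

lemma ritt (J : Ideal (MvPolynomial ℤ ℂ)) (hJ : Stable J) : Stable J.radical := by
  rintro a f ⟨n, hn⟩
  exact ⟨2 * (0 + n), ritt_aux J hJ a f n 0 (by simpa using hn)⟩

/-- ideal generated by variables with small index -/
noncomputable def slab (b : ℕ) : Ideal (MvPolynomial ℤ ℂ) :=
  Ideal.span (X '' (Set.Icc (-(b : ℤ)) b))

lemma slab_le_radical (J : Ideal (MvPolynomial ℤ ℂ)) (hJ : Stable J) (d : ℕ) (hq : q ^ d ∈ J) :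
    slab 2 ≤ (J ⊔ Ideal.span {X 0}).radical := by
  set I := J ⊔ Ideal.span {(X 0 : MvPolynomial ℤ ℂ)} with hI
  have hJI : J.radical ≤ I.radical := Ideal.radical_mono le_sup_left
  have h0 : X 0 ∈ I.radical :=
    Ideal.le_radical (Ideal.mem_sup_right (Ideal.subset_span rfl))
  have hs := ritt J hJ
  have hqr : q ∈ J.radical := ⟨d, hq⟩
  have hp : X (-1) * X 1 ∈ I.radical := by
    have : (X (-1) * X 1 : MvPolynomial ℤ ℂ) = X 0 * X 0 - q := by simp [q]
    rw [this]
    exact Ideal.sub_mem _ (Ideal.mul_mem_left _ _ h0) (hJI hqr)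
  have d2 : del 2 q = -4 * X 0 * X 2 + X 3 * X (-1) + 3 * X 1 * X 1 := by
    simp [q, Derivation.leibniz, del_X, smul_eq_C_mul]
    ring_nf
    simp only [map_ofNat, map_sub, map_one, map_neg]
    ring
  have dm2 : del (-2) q = 4 * X 0 * X (-2) - X (-3) * X 1 - 3 * X (-1) * X (-1) := by
    simp [q, Derivation.leibniz, del_X, smul_eq_C_mul]
    ring_nf
    simp only [map_ofNat, map_sub, map_one, map_neg]
    ring
  have dd2 : del 2 (del 2 q) = 8 * X 2 * X 2 + X 5 * X (-1) - 9 * X 1 * X 3 := by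
    have : del 2 q = C (-4) * X 0 * X 2 + X 3 * X (-1) + C 3 * X 1 * X 1 := by
      rw [d2]; simp only [map_neg, map_ofNat]
    rw [this]
    simp [Derivation.leibniz, del_X, smul_eq_C_mul]
    ring_nf
    simp only [map_ofNat, map_sub, map_one, map_neg]
    ring
  have ddm2 : del (-2) (del (-2) q) = 8 * X (-2) * X (-2) - X (-5) * X 1 * (-1) - 9 * X (-1) * X (-3) := by
    have : del (-2) q = C 4 * X 0 * X (-2) - X (-3) * X 1 - C 3 * X (-1) * X (-1) := by
      rw [dm2]; simp only [map_ofNat]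
    rw [this]
    simp [Derivation.leibniz, del_X, smul_eq_C_mul]
    ring_nf
    simp only [map_ofNat, map_sub, map_one, map_neg]
    ring
  have e2 := hJI (hs 2 _ hqr)
  have em2 := hJI (hs (-2) _ hqr)
  have ee2 := hJI (hs 2 _ (hs 2 _ hqr))
  have eem2 := hJI (hs (-2) _ (hs (-2) _ hqr))
  rw [d2] at e2
  rw [dm2] at em2
  rw [dd2] at ee2
  rw [ddm2] at eem2
  have hrad : ∀ (f : MvPolynomial ℤ ℂ) (n : ℕ), f ^ n ∈ I.radical → f ∈ I.radical := by
    intro f n h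
    exact (Ideal.radical_idem I) ▸ ⟨n, h⟩
  have h1 : X 1 ∈ I.radical := by
    apply hrad _ 3
    have : (X 1 ^ 3 : MvPolynomial ℤ ℂ) = C (1/3) * (X 1 * (-4 * X 0 * X 2 + X 3 * X (-1) + 3 * X 1 * X 1)
      + (4 * X 1 * X 2) * X 0 - X 3 * (X (-1) * X 1)) := by
      have : (C (1/3) * 3 : MvPolynomial ℤ ℂ) = 1 := by
        rw [← map_ofNat C, ← C_mul]; norm_num
      linear_combination (-X 1 ^ 3) * this
    rw [this]
    exact Ideal.mul_mem_left _ _ (Ideal.sub_mem _ (Ideal.add_mem _ (Ideal.mul_mem_left _ _ e2)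
      (Ideal.mul_mem_left _ _ h0)) (Ideal.mul_mem_left _ _ hp))
  have hm1 : X (-1) ∈ I.radical := by
    apply hrad _ 3
    have : (X (-1) ^ 3 : MvPolynomial ℤ ℂ) = C (-1/3) * (X (-1) * (4 * X 0 * X (-2) - X (-3) * X 1 - 3 * X (-1) * X (-1))
      + (-4 * X (-1) * X (-2)) * X 0 - (-X (-3)) * (X (-1) * X 1)) := by
      have : (C (-1/3) * 3 : MvPolynomial ℤ ℂ) = -1 := by
        rw [← map_ofNat C, ← C_mul, ← C_1, ← C_neg]; norm_num
      linear_combination (X (-1) ^ 3) * this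
    rw [this]
    exact Ideal.mul_mem_left _ _ (Ideal.sub_mem _ (Ideal.add_mem _ (Ideal.mul_mem_left _ _ em2)
      (Ideal.mul_mem_left _ _ h0)) (Ideal.mul_mem_left _ _ hp))
  have h8 : (C (1/8) * 8 : MvPolynomial ℤ ℂ) = 1 := by
    rw [← map_ofNat C, ← C_mul]; norm_num
  have h2 : X 2 ∈ I.radical := by
    apply hrad _ 2
    have : (X 2 ^ 2 : MvPolynomial ℤ ℂ) = C (1/8) * ((8 * X 2 * X 2 + X 5 * X (-1) - 9 * X 1 * X 3)
      + (- X 5) * X (-1) - (-9 * X 3) * X 1) := by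
      linear_combination (-X 2 ^ 2) * h8
    rw [this]
    exact Ideal.mul_mem_left _ _ (Ideal.sub_mem _ (Ideal.add_mem _ ee2
      (Ideal.mul_mem_left _ _ hm1)) (Ideal.mul_mem_left _ _ h1))
  have hm2 : X (-2) ∈ I.radical := by
    apply hrad _ 2
    have : (X (-2) ^ 2 : MvPolynomial ℤ ℂ) = C (1/8) * ((8 * X (-2) * X (-2) - X (-5) * X 1 * (-1) - 9 * X (-1) * X (-3))
      + (- X (-5)) * X 1 - (-9 * X (-3)) * X (-1)) := by
      linear_combination (-X (-2) ^ 2) * h8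
    rw [this]
    exact Ideal.mul_mem_left _ _ (Ideal.sub_mem _ (Ideal.add_mem _ eem2
      (Ideal.mul_mem_left _ _ h1)) (Ideal.mul_mem_left _ _ hm1))
  rw [slab, Ideal.span_le]
  rintro _ ⟨j, ⟨hj1, hj2⟩, rfl⟩
  push_cast at hj1 hj2
  interval_cases j
  · exact hm2
  · exact hm1
  · exact h0
  · exact h1
  · exact h2

end VirAux

namespace VirAux
open MvPolynomial

noncomputable def iterDel : (n : ℕ) → (Fin n → ℤ) → MvPolynomial ℤ ℂ →ₗ[ℂ] MvPolynomial ℤ ℂ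
  | 0, _ => LinearMap.id
  | n + 1, a => iterDel n (fun i => a i.succ) ∘ₗ (del (a 0)).toLinearMap

lemma del_pow_mem (I : Ideal (MvPolynomial ℤ ℂ)) (a : ℤ) (m : ℕ) :
    ∀ f ∈ I ^ (m + 1), del a f ∈ I ^ m := by
  induction m with
  | zero => intro f _; simp
  | succ m ih =>
    intro f hf
    rw [pow_succ] at hf
    induction hf using Submodule.mul_induction_on' with
    | mem_mul_mem x hx y hy =>
      rw [Derivation.leibniz, smul_eq_mul, smul_eq_mul]
      refine Ideal.add_mem _ (Ideal.mul_mem_right _ _ hx) ?_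
      rw [pow_succ, mul_comm y]
      exact Ideal.mul_mem_mul (ih x hx) hy
    | add x _ y _ hx hy =>
      rw [map_add]; exact Ideal.add_mem _ hx hy

lemma iterDel_pow_mem (I : Ideal (MvPolynomial ℤ ℂ)) (n : ℕ) :
    ∀ (a : Fin n → ℤ), ∀ f ∈ I ^ (n + 1), iterDel n a f ∈ I := by
  induction n with
  | zero => intro a f hf; simpa [iterDel] using hf
  | succ n ih =>
    intro a f hf
    exact ih _ _ (del_pow_mem I _ _ f hf)

lemma iterDel_stable (J : Ideal (MvPolynomial ℤ ℂ)) (hJ : Stable J) (n : ℕ) :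
    ∀ (a : Fin n → ℤ), ∀ f ∈ J, iterDel n a f ∈ J := by
  induction n with
  | zero => intro a f hf; simpa [iterDel] using hf
  | succ n ih =>
    intro a f hf
    exact ih _ _ (hJ _ f hf)

lemma del_prod_finset {ι : Type*} [DecidableEq ι] (a : ℤ) (s : Finset ι)
    (f : ι → MvPolynomial ℤ ℂ) :
    del a (∏ i ∈ s, f i) = ∑ i ∈ s, (∏ j ∈ s.erase i, f j) * del a (f i) := by
  induction s using Finset.induction_on with
  | empty => simp
  | insert x s hx ih =>
    rw [Finset.prod_insert hx, Derivation.leibniz, ih, Finset.sum_insert hx,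
      Finset.erase_insert hx, add_comm, smul_eq_mul, smul_eq_mul, Finset.mul_sum]
    congr 1
    refine Finset.sum_congr rfl fun i hi => ?_
    have hne : x ≠ i := fun h => hx (h ▸ hi)
    rw [Finset.erase_insert_of_ne hne, Finset.prod_insert (by simp [hx]), mul_assoc]

lemma del_prod_fin (a : ℤ) (n : ℕ) (f : Fin n → MvPolynomial ℤ ℂ) :
    del a (∏ i, f i) = ∑ i, (∏ j ∈ Finset.univ.erase i, f j) * del a (f i) :=
  del_prod_finset a _ f

lemma prod_swap (n : ℕ) (f : Fin (n + 1) → MvPolynomial ℤ ℂ) (i : Fin (n + 1)) :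
    ∏ j ∈ Finset.univ.erase i, f j = ∏ j : Fin n, f (Equiv.swap 0 i j.succ) := by
  symm
  refine Finset.prod_bij (fun j _ => Equiv.swap 0 i j.succ) ?_ ?_ ?_ ?_
  · intro j _
    simp only [Finset.mem_erase, Finset.mem_univ, and_true]
    intro h
    have : Equiv.swap 0 i j.succ = Equiv.swap 0 i 0 := by rw [h, Equiv.swap_apply_left]
    exact Fin.succ_ne_zero j ((Equiv.swap 0 i).injective this)
  · intro j _ j' _ h
    exact Fin.succ_injective _ ((Equiv.swap 0 i).injective h)
  · intro b hb
    have hb' : b ≠ i := by simpa using hb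
    have : Equiv.swap 0 i b ≠ 0 := by
      intro h
      apply hb'
      have := congrArg (Equiv.swap 0 i) h
      simpa using this
    obtain ⟨c, hc⟩ := Fin.exists_succ_eq.2 this
    exact ⟨c, Finset.mem_univ _, by rw [hc]; simp⟩
  · intros; rfl

lemma iterDel_prod (I : Ideal (MvPolynomial ℤ ℂ)) (n : ℕ) :
    ∀ (a : Fin n → ℤ) (f : Fin n → MvPolynomial ℤ ℂ) (_ : ∀ i, f i ∈ I) (g : MvPolynomial ℤ ℂ),
    iterDel n a (g * ∏ i, f i) - g * ∑ σ : Equiv.Perm (Fin n), ∏ j, del (a j) (f (σ j)) ∈ I := by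
  induction n with
  | zero => intro a f hf g; simp [iterDel]
  | succ n ih =>
    intro a f hf g
    have h1 : iterDel (n + 1) a (g * ∏ i, f i) =
        iterDel n (fun i => a i.succ) (del (a 0) g * ∏ i, f i) +
        ∑ i, iterDel n (fun i => a i.succ)
          ((g * del (a 0) (f i)) * ∏ j : Fin n, f (Equiv.swap 0 i j.succ)) := by
      simp only [iterDel, LinearMap.comp_apply]
      rw [← map_sum, ← map_add]
      congr 1
      change del (a 0) _ = _
      rw [Derivation.leibniz, del_prod_fin, smul_eq_mul, smul_eq_mul, Finset.mul_sum, add_comm,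
        mul_comm (del (a 0) g)]
      congr 1
      refine Finset.sum_congr rfl fun i _ => ?_
      rw [prod_swap]; ring
    have h2 : g * ∑ σ : Equiv.Perm (Fin (n + 1)), ∏ j, del (a j) (f (σ j)) =
        ∑ i, (g * del (a 0) (f i)) * ∑ τ : Equiv.Perm (Fin n), ∏ j : Fin n,
          del (a j.succ) (f (Equiv.swap 0 i (τ j).succ)) := by
      rw [← (Equiv.Perm.decomposeFin (n := n)).symm.sum_comp, Fintype.sum_prod_type, Finset.mul_sum]
      refine Finset.sum_congr rfl fun i _ => ?_
      rw [mul_assoc]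
      congr 1
      rw [Finset.mul_sum]
      refine Finset.sum_congr rfl fun τ _ => ?_
      rw [Fin.prod_univ_succ]
      simp
    rw [h1, h2, add_sub_assoc, ← Finset.sum_sub_distrib]
    refine Ideal.add_mem _ ?_ (Ideal.sum_mem _ fun i _ => ?_)
    · apply iterDel_pow_mem
      apply Ideal.mul_mem_left
      have := Ideal.prod_mem_prod (s := Finset.univ) (I := fun _ : Fin (n+1) => I) (x := f) (fun i _ => hf i)
      simpa using this
    · exact ih _ (fun j => f (Equiv.swap 0 i j.succ)) (fun j => hf _) _

lemma q_ne_zero : q ≠ 0 := by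
  intro h
  have := congrArg (eval (fun i : ℤ => if i = 0 then (1:ℂ) else 0)) h
  simp [q] at this

lemma q_pow_expand (d : ℕ) : ∃ w : (Fin (2 * d) → ℤ) → ℂ,
    q ^ d = ∑ c ∈ Fintype.piFinset (fun _ : Fin (2 * d) => Finset.Icc (-1 : ℤ) 1),
      w c • ∏ i, X (c i) := by
  set W : Submodule ℂ (MvPolynomial ℤ ℂ) := span ℂ (X '' (Set.Icc (-1) 1)) with hW
  have hX : ∀ j ∈ Set.Icc (-1 : ℤ) 1, X j ∈ W := fun j hj => subset_span ⟨j, hj, rfl⟩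
  have hq : q ∈ W ^ 2 := by
    rw [pow_two]
    exact sub_mem (mul_mem_mul (hX _ (by simp)) (hX _ (by simp)))
      (mul_mem_mul (hX _ (by simp)) (hX _ (by simp)))
  have h2 : q ^ d ∈ W ^ (2 * d) := by
    rw [pow_mul]; exact Submodule.pow_mem_pow _ hq d
  rw [hW, Submodule.span_pow] at h2
  have h3 : q ^ d ∈ span ℂ ((fun c : Fin (2 * d) → ℤ => ∏ i, (X (c i) : MvPolynomial ℤ ℂ)) ''
      (Fintype.piFinset (fun _ : Fin (2 * d) => Finset.Icc (-1 : ℤ) 1))) := by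
    refine span_mono ?_ h2
    intro x hx
    rw [Set.mem_pow] at hx
    obtain ⟨f, rfl⟩ := hx
    choose g hg1 hg2 using fun i => (f i).2
    refine ⟨g, ?_, ?_⟩
    · rw [Finset.mem_coe, Fintype.mem_piFinset]
      intro i
      simpa using hg1 i
    · simp [List.prod_ofFn, hg2]
  rw [Submodule.mem_span_image_finset_iff_exists_fun] at h3
  obtain ⟨w, hw⟩ := h3
  classical
  refine ⟨fun c => if h : c ∈ _ then w ⟨c, h⟩ else 0, ?_⟩
  rw [← hw, ← Finset.sum_coe_sort (Fintype.piFinset (fun _ : Fin (2 * d) => Finset.Icc (-1 : ℤ) 1))]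
  refine Finset.sum_congr rfl fun c _ => ?_
  simp only [dif_pos c.2]

lemma slab_mem {b : ℕ} {j : ℤ} (h : j.natAbs ≤ b) : X j ∈ slab b :=
  Ideal.subset_span ⟨j, by constructor <;> omega, rfl⟩

lemma slab_mono {b b' : ℕ} (h : b ≤ b') : slab b ≤ slab b' := by
  apply Ideal.span_mono
  apply Set.image_mono
  apply Set.Icc_subset_Icc <;> omega

lemma sweep (J : Ideal (MvPolynomial ℤ ℂ)) (hJ : Stable J) (d : ℕ) (hq : q ^ d ∈ J)
    (y : Fin (2 * d) → ℤ) : ∏ i, X (y i) ∈ J ⊔ slab 2 := by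
  classical
  obtain ⟨w, hw⟩ := q_pow_expand d
  set B := Fintype.piFinset (fun _ : Fin (2 * d) => Finset.Icc (-1 : ℤ) 1) with hB
  have hBmem : ∀ c, c ∈ B ↔ ∀ i, (c i).natAbs ≤ 1 := by
    intro c
    rw [hB, Fintype.mem_piFinset]
    refine forall_congr' fun i => ?_
    rw [Finset.mem_Icc]; omega
  set w' : (Fin (2 * d) → ℤ) → ℂ := fun c => ∑ σ : Equiv.Perm (Fin (2 * d)), w (c ∘ σ.symm) with hw'
  have reindex : ∀ F : (Fin (2 * d) → ℤ) → MvPolynomial ℤ ℂ,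
      ∑ c ∈ B, w c • ∑ σ : Equiv.Perm (Fin (2 * d)), F (c ∘ σ) = ∑ c ∈ B, w' c • F c := by
    intro F
    simp only [hw', Finset.smul_sum, Finset.sum_smul]
    rw [Finset.sum_comm, Finset.sum_comm (s := B)]
    refine Finset.sum_congr rfl fun σ _ => ?_
    refine Finset.sum_bij' (fun c _ => c ∘ σ) (fun c _ => c ∘ σ.symm) ?_ ?_ ?_ ?_ ?_
    · intro c hc; rw [hBmem] at *; exact fun i => hc _
    · intro c hc; rw [hBmem] at *; exact fun i => hc _
    · intro c _; ext i; simp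
    · intro c _; ext i; simp
    · intro c _
      congr 2
      ext i; simp
  have hex : ∃ c ∈ B, w' c ≠ 0 := by
    by_contra! hcon
    have h1 := reindex (fun c => ∏ i, X (c i))
    have h2 : ∑ c ∈ B, w' c • ∏ i, (X (c i) : MvPolynomial ℤ ℂ) = 0 :=
      Finset.sum_eq_zero fun c hc => by rw [hcon c hc, zero_smul]
    have h3 : ∀ (c : Fin (2 * d) → ℤ), ∑ σ : Equiv.Perm (Fin (2 * d)),
        ∏ i, (X ((c ∘ σ) i) : MvPolynomial ℤ ℂ) = ((2 * d).factorial : ℂ) • ∏ i, X (c i) := by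
      intro c
      have : ∀ σ : Equiv.Perm (Fin (2 * d)), ∏ i, (X ((c ∘ σ) i) : MvPolynomial ℤ ℂ) =
          ∏ i, X (c i) := fun σ => Equiv.prod_comp σ (fun i => (X (c i) : MvPolynomial ℤ ℂ))
      simp only [this, Finset.sum_const, Finset.card_univ, Fintype.card_perm, Fintype.card_fin]
      rw [Nat.cast_smul_eq_nsmul]
    simp only [h3] at h1
    rw [h2] at h1
    have h4 : ((2 * d).factorial : ℂ) • q ^ d = 0 := by
      rw [← h1, hw, Finset.smul_sum]
      refine Finset.sum_congr rfl fun c _ => ?_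
      rw [smul_comm]
    rw [smul_eq_zero] at h4
    rcases h4 with h4 | h4
    · exact Nat.factorial_ne_zero _ (by exact_mod_cast h4)
    · exact q_ne_zero (eq_zero_of_pow_eq_zero h4)
  have key : ∀ a : Fin (2 * d) → ℤ,
      ∑ c ∈ B, w' c • ∏ j, del (a j) (X (c j)) ∈ J ⊔ slab 2 := by
    intro a
    rw [← reindex (fun c => ∏ j, del (a j) (X (c j)))]
    have h1 : iterDel (2 * d) a (q ^ d) ∈ J ⊔ slab 2 :=
      Ideal.mem_sup_left (iterDel_stable J hJ _ a _ hq)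
    have h2 : iterDel (2 * d) a (q ^ d) - ∑ c ∈ B, w c • ∑ σ : Equiv.Perm (Fin (2 * d)),
        ∏ j, del (a j) (X ((c ∘ σ) j)) ∈ slab 1 := by
      rw [hw, map_sum, ← Finset.sum_sub_distrib]
      refine Ideal.sum_mem _ fun c hc => ?_
      rw [map_smul, ← smul_sub]
      apply Submodule.smul_of_tower_mem
      have := iterDel_prod (slab 1) (2 * d) a (fun i => X (c i))
        (fun i => slab_mem ((hBmem c).1 hc i)) 1
      simpa using this
    have h3 := Ideal.mem_sup_right (S := J) (slab_mono (show 1 ≤ 2 by norm_num) h2)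
    have h4 := Ideal.sub_mem _ h1 h3
    rwa [sub_sub_cancel] at h4
  suffices H : ∀ (n : Lex (Fin (2 * d) → ℕ)) (y : Fin (2 * d) → ℤ),
      toLex (fun i => (y i).natAbs) = n → ∏ i, X (y i) ∈ J ⊔ slab 2 from H _ y rfl
  intro n
  induction n using WellFoundedLT.induction with
  | ind n ih =>
  intro y hy
  by_cases hsm : ∃ i, (y i).natAbs ≤ 2
  · obtain ⟨i, hi⟩ := hsm
    rw [← Finset.mul_prod_erase _ _ (Finset.mem_univ i)]
    exact Ideal.mem_sup_right (Ideal.mul_mem_right _ _ (slab_mem hi))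
  push Not at hsm
  have hne : (B.filter (fun c => w' c ≠ 0)).Nonempty := by
    obtain ⟨c, hc, h⟩ := hex
    exact ⟨c, by simp [hc, h]⟩
  obtain ⟨c0, hc0, hmax⟩ := Finset.exists_max_image _
    (fun c => (toLex (fun i => (y i).sign * c i) : Lex (Fin (2 * d) → ℤ))) hne
  rw [Finset.mem_filter] at hc0
  have hk := key (fun i => y i - c0 i)
  rw [← Finset.add_sum_erase _ _ hc0.1] at hk
  have hrest : ∑ c ∈ B.erase c0, w' c • ∏ j, del (y j - c0 j) (X (c j)) ∈ J ⊔ slab 2 := by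
    refine Ideal.sum_mem _ fun c hc => ?_
    rw [Finset.mem_erase] at hc
    by_cases hz : w' c = 0
    · rw [hz, zero_smul]; exact Ideal.zero_mem _
    apply Submodule.smul_of_tower_mem
    simp only [del_X]
    rw [Finset.prod_smul]
    apply Submodule.smul_of_tower_mem
    refine ih (toLex (fun i => (y i - c0 i + c i).natAbs)) ?_ _ rfl
    have hle := hmax c (by rw [Finset.mem_filter]; exact ⟨hc.2, hz⟩)
    have hlt := lt_of_le_of_ne hle (by
      intro h
      apply hc.1
      have h' := toLex.injective h
      ext i
      have h1 := congrFun h' i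
      have h2 : (y i).sign ≠ 0 := by
        rw [Ne, Int.sign_eq_zero_iff_zero]
        have := hsm i; omega
      exact mul_left_cancel₀ h2 h1)
    rw [← hy]
    obtain ⟨i, hi1, hi2⟩ := hlt
    have hb := (hBmem c).1 hc.2
    have hb0 := (hBmem c0).1 hc0.1
    refine ⟨i, ?_, ?_⟩
    · intro j hj
      have h1 := hi1 j hj
      have h2 := hsm j
      simp only [Pi.toLex_apply] at h1 ⊢
      rcases lt_trichotomy (y j) 0 with h | h | h
      · rw [Int.sign_eq_neg_one_of_neg h] at h1; congr 1; omega
      · omega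
      · rw [Int.sign_eq_one_of_pos h] at h1; congr 1; omega
    · have h1 := hi2
      have h2 := hsm i
      have h3 := hb i
      have h4 := hb0 i
      simp only [Pi.toLex_apply] at h1 ⊢
      rcases lt_trichotomy (y i) 0 with h | h | h
      · rw [Int.sign_eq_neg_one_of_neg h] at h1; omega
      · omega
      · rw [Int.sign_eq_one_of_pos h] at h1; omega
  have hlead := (Ideal.add_mem_iff_left _ hrest).1 hk
  simp only [del_X] at hlead
  rw [Finset.prod_smul, smul_smul] at hlead
  have hcoef : w' c0 * ∏ i, ((c0 i : ℂ) - ((y i - c0 i : ℤ) : ℂ)) ≠ 0 := by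
    refine mul_ne_zero hc0.2 (Finset.prod_ne_zero_iff.2 fun i _ => ?_)
    intro h
    have h' : (c0 i : ℤ) - (y i - c0 i) = 0 := by exact_mod_cast h
    have h1 := hsm i
    have h2 := (hBmem c0).1 hc0.1 i
    omega
  have hfin := Submodule.smul_of_tower_mem (J ⊔ slab 2)
    (w' c0 * ∏ i, ((c0 i : ℂ) - ((y i - c0 i : ℤ) : ℂ)))⁻¹ hlead
  rw [smul_smul, inv_mul_cancel₀ hcoef, one_smul] at hfin
  simpa using hfin

/-- product of a list of variables -/
noncomputable def Xl (l : List ℤ) : MvPolynomial ℤ ℂ := (l.map X).prod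

lemma partA_single (J : Ideal (MvPolynomial ℤ ℂ)) (hJ : Stable J) (d : ℕ) (hq : q ^ d ∈ J) :
    ∃ M : ℕ, 0 < M ∧ ∀ l : List ℤ, l.length = M → Xl l ∈ J ⊔ Ideal.span {X 0} := by
  set I := J ⊔ Ideal.span {(X 0 : MvPolynomial ℤ ℂ)} with hI
  have hfg : (slab 2).FG := ⟨((Set.finite_Icc (-2:ℤ) 2).image X).toFinset, by simp [slab]⟩
  obtain ⟨N, hN⟩ := Ideal.exists_pow_le_of_le_radical_of_fg (slab_le_radical J hJ d hq) hfg
  set 𝔪 : Ideal (MvPolynomial ℤ ℂ) := Ideal.span (Set.range X) with hm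
  have h1 : 𝔪 ^ (2 * d) ≤ I ⊔ slab 2 := by
    rw [hm, Ideal.span, Submodule.span_pow, Submodule.span_le]
    intro x hx
    rw [Set.mem_pow] at hx
    obtain ⟨f, rfl⟩ := hx
    choose g hg using fun i => (f i).2
    have := sweep J hJ d hq g
    simp only [List.prod_ofFn, ← hg]
    have hle : J ⊔ slab 2 ≤ I ⊔ slab 2 := sup_le_sup_right le_sup_left _
    exact hle this
  have h2 : 𝔪 ^ (2 * d * (1 + N)) ≤ I := by
    rw [pow_mul]
    refine (Ideal.pow_right_mono h1 (1 + N)).trans ?_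
    refine Ideal.sup_pow_add_le_pow_sup_pow.trans ?_
    rw [pow_one]
    exact sup_le le_rfl hN
  refine ⟨2 * d * (1 + N) + 1, Nat.succ_pos _, fun l hl => ?_⟩
  have h3 : ∀ l : List ℤ, Xl l ∈ 𝔪 ^ l.length := by
    intro l
    induction l with
    | nil => simp [Xl]
    | cons j l ih =>
      rw [List.length_cons, pow_succ']
      exact Ideal.mul_mem_mul (Ideal.subset_span ⟨j, rfl⟩) ih
  exact h2 (Ideal.pow_le_pow_right (by omega) (h3 l))

lemma stable_sInf (d : ℕ) : Stable (sInf {J | Stable J ∧ q ^ d ∈ J}) := by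
  intro a f hf
  rw [Ideal.mem_sInf] at *
  intro J hJ
  exact hJ.1 a f (hf hJ)

lemma partA (d : ℕ) : ∃ M : ℕ, 0 < M ∧ ∀ J : Ideal (MvPolynomial ℤ ℂ), Stable J → q ^ d ∈ J →
    ∀ l : List ℤ, l.length = M → Xl l ∈ J ⊔ Ideal.span {X 0} := by
  obtain ⟨M, hM, h⟩ := partA_single _ (stable_sInf d) d
    (by rw [Ideal.mem_sInf]; intro J hJ; exact hJ.2)
  refine ⟨M, hM, fun J hJ hq l hl => ?_⟩
  have hle : sInf {J | Stable J ∧ q ^ d ∈ J} ≤ J := sInf_le ⟨hJ, hq⟩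
  have hle2 : sInf {J | Stable J ∧ q ^ d ∈ J} ⊔ Ideal.span {X 0} ≤ J ⊔ Ideal.span {X 0} :=
    sup_le_sup_right hle _
  exact hle2 (h l hl)

end VirAux

namespace VirAux
open MvPolynomial
variable {V : Type} [AddCommGroup V] [Module ℂ V] (ρ : VirRep V)

noncomputable def Cas : Module.End ℂ V :=
  ρ.L 0 * ρ.L 0 + ρ.L 0 - ρ.L (-1) * ρ.L 1

lemma comm_mul (m n : ℤ) : ρ.L m * ρ.L n = ρ.L n * ρ.L m + ((n : ℂ) - (m : ℂ)) • ρ.L (m + n) +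
    ((1 / 12 : ℂ) * ((n : ℂ) ^ 3 - (n : ℂ)) * (if m + n = 0 then (1 : ℂ) else 0) * ρ.c₀) •
      (1 : Module.End ℂ V) := by
  ext v
  have := ρ.rel_LL m n v
  simp only [Module.End.mul_apply, LinearMap.add_apply, LinearMap.smul_apply, Module.End.one_apply]
  rw [sub_eq_iff_eq_add] at this
  rw [this]; abel

lemma mem_wt {μ : ℂ} {v : V} : v ∈ ρ.wt μ ↔ ρ.L 0 v = μ • v := Module.End.mem_eigenspace_iff

lemma L_wt {μ : ℂ} {v : V} (n : ℤ) (hv : v ∈ ρ.wt μ) : ρ.L n v ∈ ρ.wt (μ + n) := by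
  rw [mem_wt] at *
  have := ρ.rel_LL 0 n v
  rw [hv, map_smul, sub_eq_iff_eq_add] at this
  rw [this, zero_add]
  by_cases hn : n = 0
  · subst hn; simp [hv]
  · simp [hn, add_smul, add_comm]

lemma comm_0_1 (v : V) : ρ.L 0 (ρ.L 1 v) = ρ.L 1 (ρ.L 0 v) + ρ.L 1 v := by
  have := ρ.rel_LL 0 1 v
  rw [sub_eq_iff_eq_add] at this
  rw [this]; simp; abel

lemma comm_0_m1 (v : V) : ρ.L 0 (ρ.L (-1) v) = ρ.L (-1) (ρ.L 0 v) - ρ.L (-1) v := by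
  have := ρ.rel_LL 0 (-1) v
  rw [sub_eq_iff_eq_add] at this
  rw [this]; simp; abel

lemma comm_m1_1 (v : V) : ρ.L (-1) (ρ.L 1 v) = ρ.L 1 (ρ.L (-1) v) + (2 : ℂ) • ρ.L 0 v := by
  have := ρ.rel_LL (-1) 1 v
  rw [sub_eq_iff_eq_add] at this
  rw [this]; norm_num; rw [add_comm]

lemma Cas_apply (v : V) : Cas ρ v = ρ.L 0 (ρ.L 0 v) + ρ.L 0 v - ρ.L (-1) (ρ.L 1 v) := rfl

lemma Cas_L1 (v : V) : Cas ρ (ρ.L 1 v) = ρ.L 1 (Cas ρ v) := by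
  simp only [Cas_apply, map_sub, map_add, comm_0_1, comm_m1_1, map_smul]
  module

lemma Cas_Lm1 (v : V) : Cas ρ (ρ.L (-1) v) = ρ.L (-1) (Cas ρ v) := by
  have h := comm_m1_1 ρ v
  have h2 : ρ.L 1 (ρ.L (-1) v) = ρ.L (-1) (ρ.L 1 v) - (2 : ℂ) • ρ.L 0 v := by rw [h]; abel
  simp only [Cas_apply, map_sub, map_add, comm_0_m1, h2, map_smul]
  module

lemma Cas_wt {μ : ℂ} {v : V} (hv : v ∈ ρ.wt μ) : Cas ρ v ∈ ρ.wt μ := by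
  have h0 : ∀ w ∈ ρ.wt μ, ρ.L 0 w ∈ ρ.wt μ := fun w hw => by simpa using L_wt ρ 0 hw
  have h1 := L_wt ρ (-1) (L_wt ρ 1 hv)
  rw [Cas_apply]
  refine sub_mem (add_mem (h0 _ (h0 _ hv)) (h0 _ hv)) ?_
  simpa using h1

/-- `κ` is an eigenvalue of the Casimir on weight `l` -/
def Ev (l κ : ℂ) : Prop := ∃ w : V, w ≠ 0 ∧ w ∈ ρ.wt l ∧ Cas ρ w = κ • w

lemma Ev_up {l κ : ℂ} (h : Ev ρ l κ) (hk : l ^ 2 + l ≠ κ) : Ev ρ (l + 1) κ := by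
  obtain ⟨w, hw0, hw, hc⟩ := h
  refine ⟨ρ.L 1 w, ?_, by simpa using L_wt ρ 1 hw, by rw [Cas_L1, hc, map_smul]⟩
  intro h
  rw [mem_wt] at hw
  rw [Cas_apply, h, map_zero, hw, map_smul, hw, sub_zero, smul_smul, ← add_smul] at hc
  apply hk
  have := smul_left_injective ℂ hw0 hc
  linear_combination this

lemma Ev_down {l κ : ℂ} (h : Ev ρ l κ) (hk : l ^ 2 - l ≠ κ) : Ev ρ (l - 1) κ := by
  obtain ⟨w, hw0, hw, hc⟩ := h
  refine ⟨ρ.L (-1) w, ?_, by simpa [sub_eq_add_neg] using L_wt ρ (-1) hw,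
    by rw [Cas_Lm1, hc, map_smul]⟩
  intro h
  rw [mem_wt] at hw
  rw [Cas_apply, comm_m1_1, h, map_zero, hw, map_smul, hw, zero_add, smul_smul, smul_smul,
    ← add_smul, ← sub_smul] at hc
  apply hk
  have := smul_left_injective ℂ hw0 hc
  linear_combination this

lemma wt_finite {p : ℕ} (hp : ∀ μ : ℂ, Module.rank ℂ ↥(ρ.wt μ) ≤ (p : Cardinal))
    (l : ℂ) : Module.Finite ℂ ↥(ρ.wt l) := by
  rw [← Module.rank_lt_aleph0_iff]
  exact (hp l).trans_lt (Cardinal.natCast_lt_aleph0)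

lemma wt_finrank {p : ℕ} (hp : ∀ μ : ℂ, Module.rank ℂ ↥(ρ.wt μ) ≤ (p : Cardinal))
    (l : ℂ) : Module.finrank ℂ ↥(ρ.wt l) ≤ p := Module.finrank_le_of_rank_le (hp l)

lemma card_Ev {p : ℕ} (hp : ∀ μ : ℂ, Module.rank ℂ ↥(ρ.wt μ) ≤ (p : Cardinal))
    (l : ℂ) (T : Finset ℂ) (hT : ∀ κ ∈ T, Ev ρ l κ) : T.card ≤ p := by
  have := wt_finite ρ hp l
  choose! w hw0 hw hc using hT
  have h1 : LinearIndependent ℂ (fun κ : T => w κ) :=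
    Module.End.eigenvectors_linearIndependent' (Cas ρ) (fun κ : T => (κ : ℂ))
      Subtype.val_injective (fun κ : T => w κ)
      (fun κ => ⟨Module.End.mem_eigenspace_iff.2 (hc _ κ.2), hw0 _ κ.2⟩)
  have h2 : LinearIndependent ℂ (fun κ : T => (⟨w κ, hw _ κ.2⟩ : ρ.wt l)) :=
    LinearIndependent.of_comp (ρ.wt l).subtype h1
  have := h2.fintype_card_le_finrank
  rw [Fintype.card_coe] at this
  exact this.trans (wt_finrank ρ hp l)

end VirAux

namespace VirAux
open MvPolynomial
variable {V : Type} [AddCommGroup V] [Module ℂ V] (ρ : VirRep V)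

lemma Ev_path_up (μ κ : ℂ) (n0 : ℤ) (h : Ev ρ (μ + n0) κ) :
    (∀ n : ℤ, n0 ≤ n → Ev ρ (μ + n) κ) ∨
    ∃ n1 : ℤ, n0 ≤ n1 ∧ (μ + n1) ^ 2 + (μ + n1) = κ ∧ ∀ n : ℤ, n0 ≤ n → n ≤ n1 → Ev ρ (μ + n) κ := by
  by_cases hb : ∃ n1 : ℤ, n0 ≤ n1 ∧ (μ + n1) ^ 2 + (μ + n1) = κ ∧
      ∀ n : ℤ, n0 ≤ n → n ≤ n1 → Ev ρ (μ + n) κ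
  · exact Or.inr hb
  left
  push Not at hb
  have key : ∀ k : ℕ, ∀ n : ℤ, n0 ≤ n → n ≤ n0 + k → Ev ρ (μ + n) κ := by
    intro k
    induction k with
    | zero =>
      intro n h1 h2
      have : n = n0 := by simp at h2; omega
      rwa [this]
    | succ k ih =>
      intro n h1 h2
      by_cases hn : n ≤ n0 + k
      · exact ih n h1 hn
      have hn' : n = (n0 + k) + 1 := by push_cast at h2; omega
      by_contra hcon
      by_cases hk : (μ + (n0 + k : ℤ)) ^ 2 + (μ + (n0 + k : ℤ)) = κ
      · obtain ⟨m, hm1, hm2, hm3⟩ := hb (n0 + k) (by omega) hk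
        exact hm3 (ih m hm1 hm2)
      · have := Ev_up ρ (ih (n0 + k) (by omega) le_rfl) hk
        apply hcon
        rw [hn']
        push_cast at this ⊢
        rw [← add_assoc]
        exact this
  intro n hn
  exact key (n - n0).toNat n hn (by omega)

lemma Ev_path_down (μ κ : ℂ) (n0 : ℤ) (h : Ev ρ (μ + n0) κ) :
    (∀ n : ℤ, n ≤ n0 → Ev ρ (μ + n) κ) ∨
    ∃ n1 : ℤ, n1 ≤ n0 ∧ (μ + n1) ^ 2 - (μ + n1) = κ ∧ ∀ n : ℤ, n ≤ n0 → n1 ≤ n → Ev ρ (μ + n) κ := by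
  by_cases hb : ∃ n1 : ℤ, n1 ≤ n0 ∧ (μ + n1) ^ 2 - (μ + n1) = κ ∧
      ∀ n : ℤ, n ≤ n0 → n1 ≤ n → Ev ρ (μ + n) κ
  · exact Or.inr hb
  left
  push Not at hb
  have key : ∀ k : ℕ, ∀ n : ℤ, n ≤ n0 → n0 - k ≤ n → Ev ρ (μ + n) κ := by
    intro k
    induction k with
    | zero =>
      intro n h1 h2
      have : n = n0 := by simp at h2; omega
      rwa [this]
    | succ k ih =>
      intro n h1 h2
      by_cases hn : n0 - k ≤ n
      · exact ih n h1 hn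
      have hn' : n = (n0 - k) - 1 := by push_cast at h2; omega
      by_contra hcon
      by_cases hk : (μ + (n0 - k : ℤ)) ^ 2 - (μ + (n0 - k : ℤ)) = κ
      · obtain ⟨m, hm1, hm2, hm3⟩ := hb (n0 - k) (by omega) hk
        exact hm3 (ih m hm1 hm2)
      · have := Ev_down ρ (ih (n0 - k) (by omega) le_rfl) hk
        apply hcon
        rw [hn']
        push_cast at this ⊢
        rw [← add_sub_assoc]
        exact this
  intro n hn
  exact key (n0 - n).toNat n hn (by omega)

lemma Ev_tri (μ κ : ℂ) (n0 : ℤ) (h : Ev ρ (μ + n0) κ) :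
    (∃ N : ℤ, ∀ n : ℤ, N ≤ n → Ev ρ (μ + n) κ) ∨ (∃ N : ℤ, ∀ n : ℤ, n ≤ N → Ev ρ (μ + n) κ) ∨
    (∃ t : ℤ, 2 * μ + t = 0 ∧ Ev ρ (μ + (t / 2 : ℤ)) κ) := by
  rcases Ev_path_up ρ μ κ n0 h with h1 | ⟨n1, h1, h1', h1''⟩
  · exact Or.inl ⟨_, h1⟩
  rcases Ev_path_down ρ μ κ n0 h with h2 | ⟨n2, h2, h2', h2''⟩
  · exact Or.inr (Or.inl ⟨_, h2⟩)
  refine Or.inr (Or.inr ⟨n1 + n2, ?_, ?_⟩)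
  · have h3 : (2 * μ + n1 + n2) * ((n1 - n2 + 1 : ℤ) : ℂ) = 0 := by
      push_cast
      linear_combination h1' - h2'
    rcases mul_eq_zero.1 h3 with h4 | h4
    · push_cast; linear_combination h4
    · exfalso
      have : n1 - n2 + 1 = 0 := by exact_mod_cast h4
      omega
  · by_cases hc : n0 ≤ (n1 + n2) / 2
    · exact h1'' _ hc (by omega)
    · exact h2'' _ (by omega) (by omega)

lemma card_K {p : ℕ} (hp : ∀ μ : ℂ, Module.rank ℂ ↥(ρ.wt μ) ≤ (p : Cardinal)) (μ : ℂ)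
    (T : Finset ℂ) (hT : ∀ κ ∈ T, ∃ n : ℤ, Ev ρ (μ + n) κ) : T.card ≤ 3 * p := by
  classical
  set A := T.filter (fun κ => ∃ N : ℤ, ∀ n : ℤ, N ≤ n → Ev ρ (μ + n) κ) with hA
  set B := T.filter (fun κ => ∃ N : ℤ, ∀ n : ℤ, n ≤ N → Ev ρ (μ + n) κ) with hB
  set C := T.filter (fun κ => ∃ t : ℤ, 2 * μ + t = 0 ∧ Ev ρ (μ + (t / 2 : ℤ)) κ) with hC
  have hsub : T ⊆ A ∪ B ∪ C := by
    intro κ hκ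
    obtain ⟨n, hn⟩ := hT κ hκ
    have := Ev_tri ρ μ κ n hn
    simp only [hA, hB, hC, Finset.mem_union, Finset.mem_filter, hκ, true_and]
    tauto
  have cA : A.card ≤ p := by
    have h : ∀ κ ∈ A, ∃ N : ℤ, ∀ n : ℤ, N ≤ n → Ev ρ (μ + n) κ := fun κ hκ =>
      (Finset.mem_filter.1 hκ).2
    choose! N hN using h
    obtain ⟨M, hM⟩ := (A.image N).bddAbove
    exact card_Ev ρ hp (μ + M) A fun κ hκ => hN κ hκ M
      (hM (by simpa using ⟨κ, hκ, rfl⟩))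
  have cB : B.card ≤ p := by
    have h : ∀ κ ∈ B, ∃ N : ℤ, ∀ n : ℤ, n ≤ N → Ev ρ (μ + n) κ := fun κ hκ =>
      (Finset.mem_filter.1 hκ).2
    choose! N hN using h
    obtain ⟨M, hM⟩ := (B.image N).bddBelow
    exact card_Ev ρ hp (μ + M) B fun κ hκ => hN κ hκ M
      (hM (by simpa using ⟨κ, hκ, rfl⟩))
  have cC : C.card ≤ p := by
    rcases C.eq_empty_or_nonempty with h | ⟨κ0, h0⟩
    · rw [h]; simp
    obtain ⟨t, ht, -⟩ := (Finset.mem_filter.1 h0).2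
    refine card_Ev ρ hp (μ + (t / 2 : ℤ)) C fun κ hκ => ?_
    obtain ⟨t', ht', hE⟩ := (Finset.mem_filter.1 hκ).2
    have : t' = t := by
      have : (t' : ℂ) = t := by linear_combination ht' - ht
      exact_mod_cast this
    rwa [this] at hE
  have h1 := Finset.card_le_card hsub
  have h2 := Finset.card_union_le (A ∪ B) C
  have h3 := Finset.card_union_le A B
  omega

lemma aeval_restrict_coe (f : Module.End ℂ V) (W : Submodule ℂ V) (h : ∀ x ∈ W, f x ∈ W)
    (P : Polynomial ℂ) (x : W) :
    ((Polynomial.aeval (f.restrict h) P x : W) : V) = Polynomial.aeval f P (x : V) := by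
  induction P using Polynomial.induction_on' generalizing x with
  | add P Q hP hQ => simp [hP, hQ]
  | monomial n a =>
    rw [Polynomial.aeval_monomial, Polynomial.aeval_monomial]
    simp only [Module.End.mul_apply, Module.algebraMap_end_apply, Submodule.coe_smul]
    congr 1
    induction n generalizing x with
    | zero => simp
    | succ n ih =>
      rw [pow_succ, pow_succ, Module.End.mul_apply, Module.End.mul_apply, ih]
      rfl

lemma partB {p : ℕ} (hp : ∀ μ : ℂ, Module.rank ℂ ↥(ρ.wt μ) ≤ (p : Cardinal)) (μ : ℂ) :
    ∃ R : List ℂ, R.length ≤ 3 * p * p ∧ ∀ n : ℤ, ∀ v ∈ ρ.wt (μ + n),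
      (R.map (fun κ => Cas ρ - algebraMap ℂ (Module.End ℂ V) κ)).prod v = 0 := by
  classical
  set K : Set ℂ := {κ | ∃ n : ℤ, Ev ρ (μ + n) κ} with hK
  have hfin : K.Finite := by
    by_contra hinf
    obtain ⟨T, hT, hc⟩ := Set.Infinite.exists_subset_card_eq hinf (3 * p + 1)
    have := card_K ρ hp μ T (fun κ hκ => hT hκ)
    omega
  set T := hfin.toFinset with hT
  have hcard := card_K ρ hp μ T (fun κ hκ => hfin.mem_toFinset.1 hκ)
  refine ⟨(p • T.val).toList, ?_, ?_⟩
  · simp only [Multiset.length_toList, Multiset.card_nsmul, Finset.card_val]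
    nlinarith
  intro n v hv
  set P : Polynomial ℂ := ((p • T.val).map (fun κ => Polynomial.X - Polynomial.C κ)).prod with hP
  have h1 : ((p • T.val).toList.map (fun κ => Cas ρ - algebraMap ℂ (Module.End ℂ V) κ)).prod =
      Polynomial.aeval (Cas ρ) P := by
    rw [hP, ← Multiset.coe_toList (p • T.val), Multiset.map_coe, Multiset.prod_coe, map_list_prod,
      List.map_map, Multiset.coe_toList]
    congr 1
    apply List.map_congr_left
    intro κ _
    simp
  rw [h1]
  have := wt_finite ρ hp (μ + n)
  have hst : ∀ x ∈ ρ.wt (μ + n), Cas ρ x ∈ ρ.wt (μ + n) := fun x hx => Cas_wt ρ hx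
  set f := (Cas ρ).restrict hst with hf
  have hdvd : f.charpoly ∣ P := by
    rw [(IsAlgClosed.splits f.charpoly).eq_prod_roots_of_monic f.charpoly_monic, hP]
    apply Multiset.prod_dvd_prod_of_le
    apply Multiset.map_le_map
    rw [Multiset.le_iff_count]
    intro κ
    by_cases hκ : κ ∈ f.charpoly.roots
    · have h2 : κ ∈ T := by
        have h3 : Module.End.HasEigenvalue f κ := by
          rw [Module.End.hasEigenvalue_iff_isRoot_charpoly]
          exact Polynomial.isRoot_of_mem_roots hκ
        obtain ⟨w, hw⟩ := h3.exists_hasEigenvector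
        simp only [hT, Set.Finite.mem_toFinset, hK]
        refine ⟨n, w, by simpa using hw.2, w.2, ?_⟩
        have := congrArg (Subtype.val) (Module.End.mem_eigenspace_iff.1 hw.1)
        exact this
      rw [Multiset.count_nsmul, Multiset.count_eq_one_of_mem T.nodup h2, mul_one]
      refine (Multiset.count_le_card _ _).trans ((Polynomial.card_roots' _).trans ?_)
      rw [LinearMap.charpoly_natDegree]
      exact wt_finrank ρ hp _
    · rw [Multiset.count_eq_zero_of_notMem hκ]; exact Nat.zero_le _
  have hz : Polynomial.aeval f P = 0 := by
    obtain ⟨g, hg⟩ := hdvd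
    rw [hg, map_mul, LinearMap.aeval_self_charpoly, zero_mul]
  rw [← aeval_restrict_coe (Cas ρ) _ hst P ⟨v, hv⟩, ← hf, hz]
  rfl

end VirAux

namespace VirAux
open MvPolynomial
variable {V : Type} [AddCommGroup V] [Module ℂ V] (ρ : VirRep V)

noncomputable def op (l : List ℤ) : Module.End ℂ V := (l.map ρ.L).prod

lemma op_nil : op ρ [] = 1 := rfl
lemma op_cons (j : ℤ) (l : List ℤ) : op ρ (j :: l) = ρ.L j * op ρ l := by simp [op]
lemma op_append (l l' : List ℤ) : op ρ (l ++ l') = op ρ l * op ρ l' := by simp [op]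

/-- operators killing all weight spaces in the coset of `μ` -/
def Nil (μ : ℂ) : Submodule ℂ (Module.End ℂ V) where
  carrier := {A | ∀ n : ℤ, ∀ v ∈ ρ.wt (μ + n), A v = 0}
  add_mem' := by
    intro A B hA hB n v hv
    simp [hA n v hv, hB n v hv]
  zero_mem' := by intro n v _; rfl
  smul_mem' := by
    intro c A hA n v hv
    simp [hA n v hv]

lemma Nil_left (μ : ℂ) (j : ℤ) {A : Module.End ℂ V} (hA : A ∈ Nil ρ μ) : ρ.L j * A ∈ Nil ρ μ := by
  intro n v hv
  rw [Module.End.mul_apply, hA n v hv, map_zero]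

lemma Nil_right (μ : ℂ) (j : ℤ) {A : Module.End ℂ V} (hA : A ∈ Nil ρ μ) : A * ρ.L j ∈ Nil ρ μ := by
  intro n v hv
  rw [Module.End.mul_apply]
  have := L_wt ρ j hv
  rw [add_assoc] at this
  exact hA (n + j) _ (by push_cast; exact this)

def U (μ : ℂ) (m : ℕ) : Submodule ℂ (Module.End ℂ V) :=
  span ℂ {A | ∃ l : List ℤ, l.length < m ∧ op ρ l = A} ⊔ Nil ρ μ

variable (μ : ℂ)

lemma op_mem_U {m : ℕ} {l : List ℤ} (h : l.length < m) : op ρ l ∈ U ρ μ m :=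
  mem_sup_left (subset_span ⟨l, h, rfl⟩)

lemma U_le {m : ℕ} {W : Submodule ℂ (Module.End ℂ V)} (h1 : ∀ l : List ℤ, l.length < m → op ρ l ∈ W)
    (h2 : Nil ρ μ ≤ W) : U ρ μ m ≤ W := by
  refine sup_le (span_le.2 ?_) h2
  rintro _ ⟨l, hl, rfl⟩
  exact h1 l hl

lemma U_mono {m m' : ℕ} (h : m ≤ m') : U ρ μ m ≤ U ρ μ m' :=
  U_le ρ μ (fun _ hl => op_mem_U ρ μ (hl.trans_le h)) le_sup_right

lemma U_left (j : ℤ) (m : ℕ) : U ρ μ m ≤ (U ρ μ (m + 1)).comap (LinearMap.mulLeft ℂ (ρ.L j)) := by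
  refine U_le ρ μ (fun l hl => ?_) (fun A hA => ?_)
  · rw [mem_comap, LinearMap.mulLeft_apply, ← op_cons]
    exact op_mem_U ρ μ (by simpa using hl)
  · exact mem_sup_right (Nil_left ρ μ j hA)

lemma U_right (j : ℤ) (m : ℕ) : U ρ μ m ≤ (U ρ μ (m + 1)).comap (LinearMap.mulRight ℂ (ρ.L j)) := by
  refine U_le ρ μ (fun l hl => ?_) (fun A hA => ?_)
  · rw [mem_comap, LinearMap.mulRight_apply]
    have : op ρ l * ρ.L j = op ρ (l ++ [j]) := by simp [op]
    rw [this]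
    exact op_mem_U ρ μ (by simpa using hl)
  · exact mem_sup_right (Nil_right ρ μ j hA)

/-- commutator with `L a` -/
noncomputable def adL (a : ℤ) : Module.End ℂ V →ₗ[ℂ] Module.End ℂ V :=
  LinearMap.mulLeft ℂ (ρ.L a) - LinearMap.mulRight ℂ (ρ.L a)

lemma adL_apply (a : ℤ) (A : Module.End ℂ V) : adL ρ a A = ρ.L a * A - A * ρ.L a := rfl

lemma exists_comm (a j : ℤ) : ∃ c : ℂ, ρ.L a * ρ.L j - ρ.L j * ρ.L a =
    ((j : ℂ) - (a : ℂ)) • ρ.L (a + j) + c • (1 : Module.End ℂ V) :=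
  ⟨_, by rw [comm_mul ρ a j, add_assoc, add_sub_cancel_left]⟩

lemma adL_cons (a j : ℤ) (l : List ℤ) : ∃ c : ℂ, adL ρ a (op ρ (j :: l)) =
    ((j : ℂ) - (a : ℂ)) • op ρ ((a + j) :: l) + c • op ρ l + ρ.L j * adL ρ a (op ρ l) := by
  obtain ⟨c, hc⟩ := exists_comm ρ a j
  refine ⟨c, ?_⟩
  have h : adL ρ a (op ρ (j :: l)) = (ρ.L a * ρ.L j - ρ.L j * ρ.L a) * op ρ l +
      ρ.L j * adL ρ a (op ρ l) := by
    rw [adL_apply, adL_apply, op_cons]; noncomm_ring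
  rw [h, hc, op_cons, add_mul, smul_mul_assoc, smul_mul_assoc, one_mul]

lemma adL_op (a : ℤ) (l : List ℤ) : adL ρ a (op ρ l) ∈ U ρ μ (l.length + 1) := by
  induction l with
  | nil => rw [op_nil, adL_apply, mul_one, one_mul, sub_self]; exact zero_mem _
  | cons j l ih =>
    obtain ⟨c, hc⟩ := adL_cons ρ a j l
    rw [hc]
    refine add_mem (add_mem (smul_mem _ _ (op_mem_U ρ μ (by simp)))
      (smul_mem _ _ (op_mem_U ρ μ (by simp)))) ?_
    exact U_left ρ μ j _ ih

lemma U_ad (a : ℤ) (m : ℕ) : U ρ μ m ≤ (U ρ μ m).comap (adL ρ a) := by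
  refine U_le ρ μ (fun l hl => ?_) (fun A hA => ?_)
  · exact U_mono ρ μ hl (adL_op ρ μ a l)
  · exact mem_sup_right (sub_mem (Nil_left ρ μ a hA) (Nil_right ρ μ a hA))

lemma op_perm {l l' : List ℤ} (h : l.Perm l') : op ρ l - op ρ l' ∈ U ρ μ l.length := by
  induction h with
  | nil => rw [sub_self]; exact zero_mem _
  | cons j h ih =>
    rw [op_cons, op_cons, ← mul_sub]
    exact U_left ρ μ j _ ih
  | swap a b l =>
    have h : op ρ (b :: a :: l) - op ρ (a :: b :: l) =
        (ρ.L b * ρ.L a - ρ.L a * ρ.L b) * op ρ l := by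
      simp only [op_cons]; noncomm_ring
    obtain ⟨c, hc⟩ := exists_comm ρ b a
    rw [h, hc, add_mul, smul_mul_assoc, smul_mul_assoc, one_mul, ← op_cons]
    exact add_mem (smul_mem _ _ (op_mem_U ρ μ (by simp)))
      (smul_mem _ _ (op_mem_U ρ μ (by simp)))
  | trans h1 h2 ih1 ih2 =>
    rw [← h1.length_eq] at ih2
    have := add_mem ih1 ih2
    rwa [sub_add_sub_cancel] at this

lemma Xl_cons (j : ℤ) (l : List ℤ) : Xl (j :: l) = X j * Xl l := by simp [Xl]

lemma Xl_eq_monomial (l : List ℤ) : Xl l = monomial (Multiset.toFinsupp (l : Multiset ℤ)) 1 := by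
  induction l with
  | nil => simp [Xl]
  | cons j l ih =>
    rw [Xl_cons, ih, ← Multiset.cons_coe, ← Multiset.singleton_add, map_add,
      Multiset.toFinsupp_singleton, X, monomial_mul, one_mul]

lemma Xl_ext {M : Type*} [AddCommGroup M] [Module ℂ M] {f g : MvPolynomial ℤ ℂ →ₗ[ℂ] M}
    (h : ∀ l, f (Xl l) = g (Xl l)) : f = g := by
  apply (basisMonomials ℤ ℂ).ext
  intro s
  rw [coe_basisMonomials]
  have h1 : monomial s (1 : ℂ) = Xl (Finsupp.toMultiset s).toList := by
    rw [Xl_eq_monomial, Multiset.coe_toList]; simp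
  change f (monomial s 1) = g (monomial s 1)
  rw [h1, h]

noncomputable def sig (m : ℕ) : MvPolynomial ℤ ℂ →ₗ[ℂ] (Module.End ℂ V ⧸ U ρ μ m) :=
  (basisMonomials ℤ ℂ).constr ℂ (fun s =>
    if Multiset.card (Finsupp.toMultiset s) = m then
      (U ρ μ m).mkQ (op ρ (Finsupp.toMultiset s).toList) else 0)

lemma sig_Xl (m : ℕ) (l : List ℤ) :
    sig ρ μ m (Xl l) = if l.length = m then (U ρ μ m).mkQ (op ρ l) else 0 := by
  have h1 : Xl l = basisMonomials ℤ ℂ (Multiset.toFinsupp (l : Multiset ℤ)) := by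
    rw [Xl_eq_monomial, coe_basisMonomials]
  rw [h1, sig, Module.Basis.constr_basis, Multiset.toFinsupp_toMultiset, Multiset.coe_card]
  split_ifs with h
  · subst h
    rw [← sub_eq_zero, ← map_sub, mkQ_apply, Quotient.mk_eq_zero]
    have hp : (l : Multiset ℤ).toList.Perm l := by
      rw [← Multiset.coe_eq_coe, Multiset.coe_toList]
    have := op_perm ρ μ hp
    rwa [hp.length_eq] at this
  · rfl

lemma sig_zero_X (j : ℤ) (f : MvPolynomial ℤ ℂ) : sig ρ μ 0 (X j * f) = 0 := by
  have h : (sig ρ μ 0) ∘ₗ LinearMap.mulLeft ℂ (X j) = 0 := by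
    apply Xl_ext
    intro l
    rw [LinearMap.comp_apply, LinearMap.mulLeft_apply, ← Xl_cons, sig_Xl]
    simp
  exact LinearMap.congr_fun h f

noncomputable def lam (j : ℤ) (m : ℕ) :
    (Module.End ℂ V ⧸ U ρ μ m) →ₗ[ℂ] (Module.End ℂ V ⧸ U ρ μ (m + 1)) :=
  (U ρ μ m).mapQ (U ρ μ (m + 1)) (LinearMap.mulLeft ℂ (ρ.L j)) (U_left ρ μ j m)

noncomputable def rho (j : ℤ) (m : ℕ) :
    (Module.End ℂ V ⧸ U ρ μ m) →ₗ[ℂ] (Module.End ℂ V ⧸ U ρ μ (m + 1)) :=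
  (U ρ μ m).mapQ (U ρ μ (m + 1)) (LinearMap.mulRight ℂ (ρ.L j)) (U_right ρ μ j m)

noncomputable def adq (a : ℤ) (m : ℕ) :
    (Module.End ℂ V ⧸ U ρ μ m) →ₗ[ℂ] (Module.End ℂ V ⧸ U ρ μ m) :=
  (U ρ μ m).mapQ (U ρ μ m) (adL ρ a) (U_ad ρ μ a m)

lemma sig_X (j : ℤ) (m : ℕ) (f : MvPolynomial ℤ ℂ) :
    sig ρ μ (m + 1) (X j * f) = lam ρ μ j m (sig ρ μ m f) := by
  have h : (sig ρ μ (m + 1)) ∘ₗ LinearMap.mulLeft ℂ (X j) = lam ρ μ j m ∘ₗ sig ρ μ m := by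
    apply Xl_ext
    intro l
    rw [LinearMap.comp_apply, LinearMap.mulLeft_apply, ← Xl_cons, sig_Xl, LinearMap.comp_apply,
      sig_Xl, List.length_cons, op_cons]
    by_cases hl : l.length = m
    · rw [if_pos (by omega), if_pos hl]; rfl
    · rw [if_neg (by omega), if_neg hl, map_zero]
  exact LinearMap.congr_fun h f

lemma sig_X_right (j : ℤ) (m : ℕ) (f : MvPolynomial ℤ ℂ) :
    sig ρ μ (m + 1) (X j * f) = rho ρ μ j m (sig ρ μ m f) := by
  have h : (sig ρ μ (m + 1)) ∘ₗ LinearMap.mulLeft ℂ (X j) = rho ρ μ j m ∘ₗ sig ρ μ m := by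
    apply Xl_ext
    intro l
    rw [LinearMap.comp_apply, LinearMap.mulLeft_apply, ← Xl_cons, sig_Xl, LinearMap.comp_apply,
      sig_Xl, List.length_cons]
    by_cases hl : l.length = m
    · rw [if_pos (by omega), if_pos hl]
      have h1 : op ρ l * ρ.L j = op ρ (l ++ [j]) := by simp [op]
      have h2 : rho ρ μ j m ((U ρ μ m).mkQ (op ρ l)) = (U ρ μ (m + 1)).mkQ (op ρ (l ++ [j])) := by
        rw [← h1]; rfl
      rw [h2, ← sub_eq_zero, ← map_sub, mkQ_apply, Quotient.mk_eq_zero]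
      have hp : (j :: l).Perm (l ++ [j]) := (List.perm_append_singleton j l).symm
      have := op_perm ρ μ hp
      rwa [List.length_cons, hl] at this
    · rw [if_neg (by omega), if_neg hl, map_zero]
  exact LinearMap.congr_fun h f

lemma sig_del_Xl (a : ℤ) (l : List ℤ) : ∀ m : ℕ,
    sig ρ μ m (del a (Xl l)) = if l.length = m then (U ρ μ m).mkQ (adL ρ a (op ρ l)) else 0 := by
  induction l with
  | nil =>
    intro m
    have h1 : del a (Xl []) = 0 := by simp [Xl]
    have h2 : adL ρ a (op ρ []) = 0 := by rw [op_nil, adL_apply, mul_one, one_mul, sub_self]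
    rw [h1, h2]; simp
  | cons j l ih =>
    intro m
    have h1 : del a (Xl (j :: l)) = ((j : ℂ) - (a : ℂ)) • Xl ((a + j) :: l) + X j * del a (Xl l) := by
      rw [Xl_cons, Derivation.leibniz, del_X, Xl_cons, smul_eq_mul, smul_eq_mul]
      rw [add_comm, mul_smul_comm, mul_comm (Xl l)]
    rw [h1, map_add, map_smul, sig_Xl]
    rcases m with _ | m
    · rw [sig_zero_X]; simp
    rw [sig_X, ih]
    by_cases hl : l.length = m
    · rw [if_pos (by simpa using hl), if_pos hl, if_pos (by simpa using hl)]
      obtain ⟨c, hc⟩ := adL_cons ρ a j l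
      have h2 : lam ρ μ j m ((U ρ μ m).mkQ (adL ρ a (op ρ l))) =
        (U ρ μ (m + 1)).mkQ (ρ.L j * adL ρ a (op ρ l)) := rfl
      have h3 : (U ρ μ (m + 1)).mkQ (c • op ρ l) = 0 := by
        rw [mkQ_apply, Quotient.mk_eq_zero]
        exact smul_mem _ _ (op_mem_U ρ μ (by omega))
      rw [h2, hc, map_add, map_add, h3, add_zero, map_smul]
    · rw [if_neg (by simpa using hl), if_neg hl, if_neg (by simpa using hl)]
      simp

lemma sig_del (a : ℤ) (m : ℕ) (f : MvPolynomial ℤ ℂ) :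
    sig ρ μ m (del a f) = adq ρ μ a m (sig ρ μ m f) := by
  have h : (sig ρ μ m) ∘ₗ (del a).toLinearMap = adq ρ μ a m ∘ₗ sig ρ μ m := by
    apply Xl_ext
    intro l
    change sig ρ μ m (del a (Xl l)) = adq ρ μ a m (sig ρ μ m (Xl l))
    rw [sig_del_Xl, sig_Xl]
    split_ifs
    · rfl
    · rw [map_zero]
  exact LinearMap.congr_fun h f

/-- symbol ideal -/
noncomputable def JJ : Ideal (MvPolynomial ℤ ℂ) where
  carrier := {f | ∀ m, sig ρ μ m f = 0}
  add_mem' := by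
    intro f g hf hg m
    rw [map_add, hf m, hg m, add_zero]
  zero_mem' := fun m => map_zero _
  smul_mem' := by
    intro g f hf
    induction g using MvPolynomial.induction_on generalizing f with
    | C c =>
      intro m
      rw [smul_eq_mul, ← smul_eq_C_mul, map_smul, hf m, smul_zero]
    | add g g' hg hg' =>
      intro m
      rw [add_smul, map_add, hg hf m, hg' hf m, add_zero]
    | mul_X g j hg =>
      have h : ∀ m, sig ρ μ m (X j * f) = 0 := by
        intro m
        rcases m with _ | m
        · exact sig_zero_X ρ μ j f
        · rw [sig_X, hf m, map_zero]
      have := hg h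
      rwa [smul_eq_mul, ← mul_assoc] at this

lemma mem_JJ {f : MvPolynomial ℤ ℂ} : f ∈ JJ ρ μ ↔ ∀ m, sig ρ μ m f = 0 := Iff.rfl

lemma JJ_stable : Stable (JJ ρ μ) := by
  intro a f hf m
  rw [sig_del, hf m, map_zero]

lemma cas_step (R : List ℂ) :
    (R.map (fun κ => Cas ρ - algebraMap ℂ (Module.End ℂ V) κ)).prod ∈ U ρ μ (2 * R.length + 1) ∧
    sig ρ μ (2 * R.length) (q ^ R.length) = (U ρ μ (2 * R.length)).mkQ
      (R.map (fun κ => Cas ρ - algebraMap ℂ (Module.End ℂ V) κ)).prod ∧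
    ∀ m, m ≠ 2 * R.length → sig ρ μ m (q ^ R.length) = 0 := by
  induction R with
  | nil =>
    have h1 : (q ^ ([] : List ℂ).length) = Xl [] := by simp [Xl]
    refine ⟨op_mem_U ρ μ (l := []) (by simp), ?_, ?_⟩
    · rw [h1, sig_Xl]; simp [op]
    · intro m hm
      rw [h1, sig_Xl, if_neg]
      simpa using Ne.symm hm
  | cons κ R ih =>
    obtain ⟨ih1, ih2, ih3⟩ := ih
    set A := (R.map (fun κ => Cas ρ - algebraMap ℂ (Module.End ℂ V) κ)).prod with hA
    set r := R.length with hr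
    have hlen : (κ :: R).length = r + 1 := rfl
    have hprod : ((κ :: R).map (fun κ => Cas ρ - algebraMap ℂ (Module.End ℂ V) κ)).prod =
      (Cas ρ - algebraMap ℂ (Module.End ℂ V) κ) * A := by simp [hA]
    have hexp : (Cas ρ - algebraMap ℂ (Module.End ℂ V) κ) * A =
      (ρ.L 0 * (ρ.L 0 * A) - ρ.L (-1) * (ρ.L 1 * A)) + (ρ.L 0 * A - κ • A) := by
      rw [Cas, Algebra.algebraMap_eq_smul_one, sub_mul, sub_mul, add_mul, smul_mul_assoc, one_mul,
        mul_assoc, mul_assoc]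
      abel
    have hlow : ρ.L 0 * A - κ • A ∈ U ρ μ (2 * r + 2) :=
      sub_mem (U_left ρ μ 0 _ ih1) (smul_mem _ _ (U_mono ρ μ (by omega) ih1))
    have hqf : q ^ (r + 1) = X 0 * (X 0 * q ^ r) - X (-1) * (X 1 * q ^ r) := by
      have h : q = X 0 * X 0 - X (-1) * X 1 := rfl
      calc q ^ (r + 1) = q * q ^ r := pow_succ' _ _
        _ = (X 0 * X 0 - X (-1) * X 1) * q ^ r := by rw [← h]
        _ = _ := by ring
    rw [hprod, hlen, show 2 * (r + 1) = 2 * r + 1 + 1 by ring, hexp]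
    refine ⟨?_, ?_, ?_⟩
    · refine add_mem (sub_mem ?_ ?_) (U_mono ρ μ (by omega) hlow)
      · exact U_left ρ μ 0 _ (U_left ρ μ 0 _ ih1)
      · exact U_left ρ μ (-1) _ (U_left ρ μ 1 _ ih1)
    · rw [hqf, map_sub, sig_X, sig_X, sig_X, sig_X, ih2]
      have h0 : (U ρ μ (2 * r + 1 + 1)).mkQ (ρ.L 0 * A - κ • A) = 0 := by
        rw [mkQ_apply, Quotient.mk_eq_zero]; exact hlow
      rw [map_add, h0, add_zero]
      rfl
    · intro m hm
      rcases m with _ | _ | m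
      · rw [hqf, map_sub, sig_zero_X, sig_zero_X, sub_zero]
      · rw [hqf, map_sub, sig_X, sig_X, sig_zero_X, sig_zero_X, map_zero, map_zero, sub_zero]
      · rw [hqf, map_sub, sig_X, sig_X, sig_X, sig_X, ih3 m (by omega)]
        simp

lemma q_pow_mem_JJ {p : ℕ} (hp : ∀ μ : ℂ, Module.rank ℂ ↥(ρ.wt μ) ≤ (p : Cardinal)) :
    q ^ (3 * p * p) ∈ JJ ρ μ := by
  obtain ⟨R, hR, hkill⟩ := partB ρ hp μ
  have h := cas_step ρ μ R
  have h1 : q ^ R.length ∈ JJ ρ μ := by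
    intro m
    by_cases hm : m = 2 * R.length
    · rw [hm, h.2.1, mkQ_apply, Quotient.mk_eq_zero]
      exact mem_sup_right hkill
    · exact h.2.2 m hm
  exact Ideal.pow_mem_of_pow_mem _ h1 hR

lemma sig_lift (m : ℕ) (f : MvPolynomial ℤ ℂ) :
    ∃ A ∈ U ρ μ (m + 1), sig ρ μ m f = (U ρ μ m).mkQ A := by
  have hle : LinearMap.range (sig ρ μ m) ≤ (U ρ μ (m + 1)).map (U ρ μ m).mkQ := by
    rw [sig, Module.Basis.constr_range, span_le]
    rintro _ ⟨s, rfl⟩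
    dsimp only
    split_ifs with h
    · exact ⟨_, op_mem_U ρ μ (by simp [h]), rfl⟩
    · exact zero_mem _
  obtain ⟨A, hA, h⟩ := hle ⟨f, rfl⟩
  exact ⟨A, hA, h.symm⟩

lemma U_apply {m : ℕ} {v : V} (hv : v ∈ ρ.wt μ) {A : Module.End ℂ V} (hA : A ∈ U ρ μ m) :
    A v ∈ span ℂ {w | ∃ l : List ℤ, l.length < m ∧ op ρ l v = w} := by
  have : U ρ μ m ≤ (span ℂ {w | ∃ l : List ℤ, l.length < m ∧ op ρ l v = w}).comap
      (LinearMap.applyₗ v) := by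
    refine U_le ρ μ (fun l hl => subset_span ⟨l, hl, rfl⟩) (fun B hB => ?_)
    have h : B v = 0 := hB 0 v (by simpa using hv)
    rw [mem_comap, LinearMap.applyₗ_apply_apply, h]
    exact zero_mem _
  exact this hA

lemma reduce {M : ℕ} (hM : 0 < M) {v : V} (hv : v ∈ ρ.wt μ)
    (h : ∀ l : List ℤ, l.length = M → Xl l ∈ JJ ρ μ ⊔ Ideal.span {X 0}) (l : List ℤ)
    (hl : l.length = M) : op ρ l v ∈ span ℂ {w | ∃ l : List ℤ, l.length < M ∧ op ρ l v = w} := by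
  obtain ⟨m, rfl⟩ : ∃ m, M = m + 1 := ⟨M - 1, by omega⟩
  obtain ⟨f, hf, g, hg, hfg⟩ := Submodule.mem_sup.1 (h l hl)
  obtain ⟨g', rfl⟩ := Ideal.mem_span_singleton.1 hg
  have h1 := sig_Xl ρ μ (m + 1) l
  rw [if_pos hl, ← hfg, map_add, hf (m + 1), zero_add, sig_X_right] at h1
  obtain ⟨A, hA, hA'⟩ := sig_lift ρ μ m g'
  rw [hA'] at h1
  have h2 : (U ρ μ (m + 1)).mkQ (A * ρ.L 0) = (U ρ μ (m + 1)).mkQ (op ρ l) := h1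
  have h3 : op ρ l - A * ρ.L 0 ∈ U ρ μ (m + 1) := by
    rw [← Quotient.mk_eq_zero, ← mkQ_apply, map_sub, h2, sub_self]
  have h4 := U_apply ρ μ hv h3
  have h5 : (op ρ l - A * ρ.L 0) v = op ρ l v - μ • A v := by
    rw [LinearMap.sub_apply, Module.End.mul_apply, (mem_wt ρ).1 hv, map_smul]
  rw [h5] at h4
  have := add_mem h4 (smul_mem _ μ (U_apply ρ μ hv hA))
  rwa [sub_add_cancel] at this

lemma virpow_eq (v : V) (k : ℕ) : ρ.virpow k {v} = {w | ∃ l : List ℤ, l.length = k ∧ op ρ l v = w} := by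
  induction k with
  | zero =>
    ext w
    simp only [VirRep.virpow, Set.mem_singleton_iff, Set.mem_ofPred_eq, List.length_eq_zero_iff]
    constructor
    · rintro rfl; exact ⟨[], rfl, rfl⟩
    · rintro ⟨l, rfl, rfl⟩; rfl
  | succ k ih =>
    ext w
    simp only [VirRep.virpow, Set.mem_ofPred_eq, ih]
    constructor
    · rintro ⟨n, u, ⟨l, hl, rfl⟩, rfl⟩
      exact ⟨n :: l, by simp [hl], by rw [op_cons]; rfl⟩
    · rintro ⟨l, hl, rfl⟩
      rcases l with _ | ⟨n, l⟩
      · simp at hl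
      · exact ⟨n, _, ⟨l, by simpa using hl, rfl⟩, by rw [op_cons]; rfl⟩

lemma genBy_le {M : ℕ} (hM : 0 < M) {v : V} (hv : v ∈ ρ.wt μ)
    (h : ∀ l : List ℤ, l.length = M → Xl l ∈ JJ ρ μ ⊔ Ideal.span {X 0}) :
    ρ.genBy v ≤ span ℂ {w | ∃ l : List ℤ, l.length < M ∧ op ρ l v = w} := by
  set Y := span ℂ {w | ∃ l : List ℤ, l.length < M ∧ op ρ l v = w} with hY
  have hst : ∀ j : ℤ, Y ≤ Y.comap (ρ.L j) := by
    intro j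
    conv_lhs => rw [hY]
    rw [span_le]
    rintro _ ⟨l, hl, rfl⟩
    have h1 : ρ.L j (op ρ l v) = op ρ (j :: l) v := by rw [op_cons]; rfl
    change ρ.L j (op ρ l v) ∈ Y
    rw [h1]
    by_cases hl' : l.length + 1 = M
    · exact reduce ρ μ hM hv h (j :: l) hl'
    · exact subset_span ⟨j :: l, by simp; omega, rfl⟩
  have hall : ∀ l : List ℤ, op ρ l v ∈ Y := by
    intro l
    induction l with
    | nil => exact subset_span ⟨[], hM, rfl⟩
    | cons j l ih => rw [op_cons]; exact hst j ih
  rw [VirRep.genBy, span_le]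
  intro w hw
  obtain ⟨k, hk⟩ := Set.mem_iUnion.1 hw
  rw [virpow_eq] at hk
  obtain ⟨l, -, rfl⟩ := hk
  exact hall l

end VirAux

/-- Remark 3.2 of the paper. If `V` is a cuspidal weight
`Vir`-module with no trivial `Vir`-vector, then there is `m ∈ ℤ₊` such that for
every nonzero weight vector `v` of nonzero weight, every simple `Vir`-submodule
`V'` of `U(Vir)v` satisfies `V' ⊆ Σ_{1 ≤ k ≤ m} Vir^k v`. -/
theorem stmt5 {V : Type} [AddCommGroup V] [Module ℂ V] (ρ : VirRep V)
    (hweight : ρ.IsWeight) (hcusp : ρ.Cuspidal)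
    (hnotriv : ¬ ∃ v : V, v ≠ 0 ∧ ∀ m : ℤ, ρ.L m v = 0) :
    ∃ m : ℕ, 0 < m ∧ ∀ μ : ℂ, μ ≠ 0 → ∀ v ∈ ρ.wt μ, v ≠ 0 →
      ∀ V' : Submodule ℂ V, ρ.IsSimpleSubmod V' → V' ≤ ρ.genBy v →
        V' ≤ Submodule.span ℂ (⋃ k ∈ Finset.Icc 1 m, ρ.virpow k {v}) := by
  obtain ⟨-, p, hp⟩ := hcusp
  obtain ⟨M, hM, hA⟩ := VirAux.partA (3 * p * p)
  refine ⟨M, hM, ?_⟩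
  intro μ hμ v hv _ V' _ hV'
  refine hV'.trans ((VirAux.genBy_le ρ μ hM hv
    (hA _ (VirAux.JJ_stable ρ μ) (VirAux.q_pow_mem_JJ ρ μ hp))).trans ?_)
  rw [Submodule.span_le]
  rintro _ ⟨l, hl, rfl⟩
  have key : ∀ l : List ℤ, 1 ≤ l.length → l.length ≤ M →
      VirAux.op ρ l v ∈ Submodule.span ℂ (⋃ k ∈ Finset.Icc 1 M, ρ.virpow k {v}) := by
    intro l h1 h2
    apply Submodule.subset_span
    simp only [Set.mem_iUnion]
    refine ⟨l.length, Finset.mem_Icc.2 ⟨h1, h2⟩, ?_⟩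
    rw [VirAux.virpow_eq]
    exact ⟨l, rfl, rfl⟩
  rcases l with _ | ⟨j, l⟩
  · have h1 := Submodule.smul_mem _ μ⁻¹ (key [0] (by simp) (by simpa using Nat.succ_le_of_lt hM))
    have h2 : VirAux.op ρ [0] v = μ • v := by
      rw [VirAux.op_cons, VirAux.op_nil, mul_one]
      exact (VirAux.mem_wt ρ).1 hv
    rw [h2, smul_smul, inv_mul_cancel₀ hμ, one_smul] at h1
    exact h1
  · exact key _ (by simp) hl.le
end

section
/- Let V be a 𝔮-module and suppose there exist integers n > m ≥ 1 such that Q_{r₁}Q_{r₂}⋯Q_{r_m}v = 0 for all v ∈ V and all r₁, r₂, …, r_m ∈ {0, ±1, ±2, …, ±n}. Then Q_{r₁}Q_{r₂}⋯Q_{r_m}v = 0 for all v ∈ V and all r₁, r₂, …, r_m ∈ ℤ. -/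
open Submodule

/-- A module over the Lie superalgebra `𝔮` (with even part the twisted
Heisenberg–Virasoro algebra and odd part spanned by the `Q_m`): a `ℤ/2`-graded
complex vector space with parity-preserving operators `L m`, `H m`,
parity-reversing operators `Q m`, and a scalar `c₀` (the action of the central
element `C`), subject to the defining relations. -/
structure QRep (V : Type) [AddCommGroup V] [Module ℂ V] : Type where
  L : ℤ → V →ₗ[ℂ] V
  H : ℤ → V →ₗ[ℂ] V
  Q : ℤ → V →ₗ[ℂ] V
  c₀ : ℂ
  even : Submodule ℂ V
  odd : Submodule ℂ V
  grading : IsCompl even odd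
  L_even : ∀ (m : ℤ), ∀ v ∈ even, L m v ∈ even
  L_odd : ∀ (m : ℤ), ∀ v ∈ odd, L m v ∈ odd
  H_even : ∀ (m : ℤ), ∀ v ∈ even, H m v ∈ even
  H_odd : ∀ (m : ℤ), ∀ v ∈ odd, H m v ∈ odd
  Q_even : ∀ (m : ℤ), ∀ v ∈ even, Q m v ∈ odd
  Q_odd : ∀ (m : ℤ), ∀ v ∈ odd, Q m v ∈ even
  rel_LL : ∀ (m n : ℤ) (v : V),
    L m (L n v) - L n (L m v) =
      ((n : ℂ) - (m : ℂ)) • L (m + n) v +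
        ((1 / 12 : ℂ) * ((n : ℂ) ^ 3 - (n : ℂ)) *
          (if m + n = 0 then (1 : ℂ) else 0) * c₀) • v
  rel_HH : ∀ (m n : ℤ) (v : V),
    H m (H n v) - H n (H m v) =
      ((1 / 3 : ℂ) * (m : ℂ) * (if m + n = 0 then (1 : ℂ) else 0) * c₀) • v
  rel_LH : ∀ (m n : ℤ) (v : V),
    L m (H n v) - H n (L m v) = (n : ℂ) • H (m + n) v
  rel_LQ : ∀ (m p : ℤ) (v : V),
    L m (Q p v) - Q p (L m v) = ((p : ℂ) - (m : ℂ) / 2) • Q (p + m) v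
  rel_HQ : ∀ (m p : ℤ) (v : V),
    H m (Q p v) - Q p (H m v) = Q (m + p) v
  rel_QQ : ∀ (p q : ℤ) (v : V), Q p (Q q v) + Q q (Q p v) = 0

namespace QRep

variable {V : Type} [AddCommGroup V] [Module ℂ V]

/-- The composite operator `Q_{r₁} Q_{r₂} ⋯ Q_{r_k}` applied to a vector, for a
list `[r₁, r₂, …, r_k]` of indices. -/
def Qcomp (ρ : QRep V) : List ℤ → V → V
  | [], v => v
  | r :: rs, v => ρ.Q r (ρ.Qcomp rs v)

/-- The weight space `V_μ = {v ∈ V : L₀ v = μ v}`. -/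
def wt (ρ : QRep V) (μ : ℂ) : Submodule ℂ V :=
  Module.End.eigenspace (ρ.L 0) μ

/-- The parity components, indexed by `ZMod 2`. -/
def parity (ρ : QRep V) (τ : ZMod 2) : Submodule ℂ V :=
  if τ = 0 then ρ.even else ρ.odd

/-- `V` is a weight module: it is the sum of its weight spaces. -/
def IsWeight (ρ : QRep V) : Prop := (⨆ μ : ℂ, ρ.wt μ) = ⊤

/-- `V` is cuspidal: a weight module with uniformly bounded weight multiplicities
in each parity. -/
def Cuspidal (ρ : QRep V) : Prop :=
  ρ.IsWeight ∧ ∃ p : ℕ, ∀ (μ : ℂ) (τ : ZMod 2),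
    Module.rank ℂ ↥(ρ.wt μ ⊓ ρ.parity τ) ≤ (p : Cardinal)

/-- A subspace invariant under all the operators. -/
def IsSubmod (ρ : QRep V) (W : Submodule ℂ V) : Prop :=
  (∀ (m : ℤ), ∀ v ∈ W, ρ.L m v ∈ W) ∧ (∀ (m : ℤ), ∀ v ∈ W, ρ.H m v ∈ W) ∧
    (∀ (m : ℤ), ∀ v ∈ W, ρ.Q m v ∈ W)

/-- A graded subspace invariant under all the operators. -/
def IsGradedSubmod (ρ : QRep V) (W : Submodule ℂ V) : Prop :=
  ρ.IsSubmod W ∧ W = (W ⊓ ρ.even) ⊔ (W ⊓ ρ.odd)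

/-- The trivial representation: all operators act by zero. -/
def IsTrivialRep (ρ : QRep V) : Prop :=
  ∀ (m : ℤ) (v : V), ρ.L m v = 0 ∧ ρ.H m v = 0 ∧ ρ.Q m v = 0

/-- `V` is simple: nontrivial, and its only graded submodules are `⊥` and `⊤`. -/
def IsSimple (ρ : QRep V) : Prop :=
  ¬ ρ.IsTrivialRep ∧
    ∀ W : Submodule ℂ V, ρ.IsGradedSubmod W → W = ⊥ ∨ W = ⊤

end QRep

section Helpers

/-- Multipliers of a subspace of a commutative algebra. -/
def multAlg {R : Type*} [CommRing R] [Algebra ℂ R] (K : Submodule ℂ R) : Subalgebra ℂ R where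
  carrier := {s | ∀ f ∈ K, s * f ∈ K}
  mul_mem' := by
    intro a b ha hb f hf
    rw [mul_assoc]
    exact ha _ (hb _ hf)
  add_mem' := by
    intro a b ha hb f hf
    rw [add_mul]
    exact K.add_mem (ha _ hf) (hb _ hf)
  algebraMap_mem' := by
    intro c f hf
    rw [← Algebra.smul_def]
    exact K.smul_mem c hf

lemma esymm_mem {R : Type*} [CommRing R] [Algebra ℂ R] (T : Subalgebra ℂ R) {m : ℕ}
    (y : Fin m → R) (hp : ∀ k : ℕ, ∑ i, y i ^ k ∈ T) (k : ℕ) :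
    MvPolynomial.aeval y (MvPolynomial.esymm (Fin m) ℂ k) ∈ T := by
  induction k using Nat.strong_induction_on with
  | _ k ih =>
    rcases Nat.eq_zero_or_pos k with rfl | hk
    · simp [MvPolynomial.esymm_zero]
    have key := congrArg (MvPolynomial.aeval y) (MvPolynomial.mul_esymm_eq_sum (Fin m) ℂ k)
    have hT : (k : ℂ) • MvPolynomial.aeval y (MvPolynomial.esymm (Fin m) ℂ k) ∈ T := by
      have h1 : (k : ℂ) • MvPolynomial.aeval y (MvPolynomial.esymm (Fin m) ℂ k)
          = MvPolynomial.aeval y ((k : MvPolynomial (Fin m) ℂ) *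
            MvPolynomial.esymm (Fin m) ℂ k) := by
        rw [map_mul, map_natCast, Algebra.smul_def, map_natCast]
      rw [h1, key, map_mul, map_sum]
      have hneg : ∀ j : ℕ, MvPolynomial.aeval y ((-1 : MvPolynomial (Fin m) ℂ) ^ j) ∈ T := by
        intro j
        rw [map_pow, map_neg, map_one]
        exact T.pow_mem (T.neg_mem T.one_mem) _
      refine T.mul_mem (hneg _) (T.sum_mem ?_)
      intro a ha
      rw [map_mul, map_mul]
      refine T.mul_mem (T.mul_mem (hneg _) (ih _ (Finset.mem_filter.mp ha).2)) ?_
      simpa [MvPolynomial.psum] using hp a.2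
    have hk0 : (k : ℂ) ≠ 0 := by exact_mod_cast hk.ne'
    have := T.smul_mem hT ((k : ℂ)⁻¹)
    rwa [smul_smul, inv_mul_cancel₀ hk0, one_smul] at this

lemma pow_eq {R : Type*} [CommRing R] [Algebra ℂ R] {m : ℕ} (y : Fin m → R) (i : Fin m) :
    ∑ j ∈ Finset.range (m + 1),
      MvPolynomial.aeval y (MvPolynomial.esymm (Fin m) ℂ j) * (-y i) ^ (m - j) = 0 := by
  have h := MvPolynomial.prod_C_add_X_eq_sum_esymm (R := ℂ) (Fin m)
  have h2 := congrArg (fun p => MvPolynomial.aeval y (Polynomial.eval (-MvPolynomial.X i) p)) h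
  simp only [Polynomial.eval_prod, Polynomial.eval_finsetSum, map_prod, map_sum] at h2
  simp at h2
  rw [← h2]
  exact Finset.prod_eq_zero (Finset.mem_univ i) (by simp)

lemma all_pow_mem {R : Type*} [CommRing R] [Algebra ℂ R] (K : Submodule ℂ R) {m : ℕ}
    (y : Fin m → R) (hp : ∀ k : ℕ, ∀ f ∈ K, (∑ i, y i ^ k) * f ∈ K) (i : Fin m) (g : R)
    (hg : ∀ j < m, y i ^ j * g ∈ K) (j : ℕ) : y i ^ j * g ∈ K := by
  induction j using Nat.strong_induction_on with
  | _ j ih =>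
    rcases lt_or_ge j m with hj | hj
    · exact hg j hj
    have hz := pow_eq y i
    rw [Finset.sum_range_succ'] at hz
    simp only [MvPolynomial.esymm_zero, map_one, one_mul, Nat.sub_zero] at hz
    have he : y i ^ j * g = (-1) ^ (m + 1) * ∑ k ∈ Finset.range m,
        MvPolynomial.aeval y (MvPolynomial.esymm (Fin m) ℂ (k + 1)) *
          ((-1) ^ (m - (k + 1)) * (y i ^ (j - (k + 1)) * g)) := by
      have h1 : (-y i) ^ m = - ∑ k ∈ Finset.range m,
        MvPolynomial.aeval y (MvPolynomial.esymm (Fin m) ℂ (k + 1)) *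
          (-y i) ^ (m - (k + 1)) := by linear_combination hz
      have h2 : y i ^ m = (-1) ^ m * (-y i) ^ m := by
        rw [← mul_pow]; simp
      have h3 : y i ^ j * g = y i ^ m * (y i ^ (j - m) * g) := by
        rw [← mul_assoc, ← pow_add]; congr 2; omega
      rw [h3, h2, h1, pow_succ, mul_neg, mul_neg_one, neg_mul, neg_mul, mul_assoc,
        Finset.sum_mul]
      congr 2
      refine Finset.sum_congr rfl fun k hk => ?_
      have hk' := Finset.mem_range.mp hk
      have h4 : j - (k + 1) = (m - (k + 1)) + (j - m) := by omega
      rw [h4, pow_add, neg_pow]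
      ring
    have hneg : ∀ (a : ℕ) (f : R), f ∈ K → (-1) ^ a * f ∈ K := by
      intro a f hf
      rcases neg_one_pow_eq_or R a with h | h <;> simp [h, hf]
    rw [he]
    refine hneg _ _ (K.sum_mem fun k hk => ?_)
    have hk' := Finset.mem_range.mp hk
    exact esymm_mem (multAlg K) y hp (k + 1) _ (hneg _ _ (ih _ (by omega)))

variable {V : Type} [AddCommGroup V] [Module ℂ V]

/-- The composite of `Q` operators as a linear endomorphism. -/
def Qop (ρ : QRep V) (m : ℕ) (r : Fin m → ℤ) : Module.End ℂ V :=
  ((List.ofFn r).map ρ.Q).prod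

lemma Qop_succ (ρ : QRep V) (m : ℕ) (r : Fin (m + 1) → ℤ) :
    Qop ρ (m + 1) r = ρ.Q (r 0) * Qop ρ m (fun i => r i.succ) := by
  simp [Qop, List.ofFn_succ]

lemma Qcomp_eq (ρ : QRep V) (l : List ℤ) (v : V) :
    ρ.Qcomp l v = (l.map ρ.Q).prod v := by
  induction l with
  | nil => simp [QRep.Qcomp]
  | cons a l ih => simp [QRep.Qcomp, ih]

lemma H_Qop (ρ : QRep V) (k : ℤ) (m : ℕ) (r : Fin m → ℤ) :
    ∑ i, Qop ρ m (Pi.single i k + r) = ρ.H k * Qop ρ m r - Qop ρ m r * ρ.H k := by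
  induction m with
  | zero => simp [Qop]
  | succ m ih =>
    have hHQ : ρ.Q (k + r 0) = ρ.H k * ρ.Q (r 0) - ρ.Q (r 0) * ρ.H k := by
      ext v
      simpa using (ρ.rel_HQ k (r 0) v).symm
    have h0 : (fun i : Fin m => (Pi.single (0 : Fin (m + 1)) k + r : Fin (m + 1) → ℤ) i.succ) = fun i => r i.succ := by
      ext i
      simp
    have hs : ∀ j : Fin m, (fun i : Fin m => (Pi.single j.succ k + r : Fin (m + 1) → ℤ) i.succ)
        = Pi.single j k + fun i => r i.succ := by
      intro j
      ext i
      simp [Pi.single_apply]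
    have hs0 : ∀ j : Fin m, (Pi.single j.succ k + r : Fin (m + 1) → ℤ) 0 = r 0 := by
      intro j
      simp [Pi.single_apply, (Fin.succ_ne_zero j).symm]
    rw [Fin.sum_univ_succ]
    simp only [Qop_succ, h0, hs, hs0]
    rw [← Finset.mul_sum, ih]
    simp only [Pi.add_apply, Pi.single_eq_same, hHQ]
    noncomm_ring

/-- Extension of `Qop` to the Laurent polynomial ring. -/
noncomputable def Qlin (ρ : QRep V) (m : ℕ) :
    AddMonoidAlgebra ℂ (Fin m → ℤ) →ₗ[ℂ] Module.End ℂ V :=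
  (Finsupp.linearCombination ℂ (Qop ρ m)).comp
    (AddMonoidAlgebra.coeffLinearEquiv ℂ).toLinearMap

lemma Qlin_single (ρ : QRep V) (m : ℕ) (r : Fin m → ℤ) (c : ℂ) :
    Qlin ρ m (AddMonoidAlgebra.single r c) = c • Qop ρ m r := by
  simp [Qlin]

lemma Qlin_psum (ρ : QRep V) (m : ℕ) (k : ℤ) (f : AddMonoidAlgebra ℂ (Fin m → ℤ)) :
    Qlin ρ m ((∑ i : Fin m, AddMonoidAlgebra.single (Pi.single i k) (1 : ℂ)) * f)
      = ρ.H k * Qlin ρ m f - Qlin ρ m f * ρ.H k := by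
  induction f using AddMonoidAlgebra.induction_linear with
  | zero => simp
  | add f g hf hg => rw [mul_add, map_add, hf, hg, map_add]; noncomm_ring
  | single r c =>
    rw [Finset.sum_mul, map_sum]
    simp only [AddMonoidAlgebra.single_mul_single, Qlin_single, one_mul]
    rw [← Finset.smul_sum, H_Qop, smul_sub, mul_smul_comm, smul_mul_assoc]

lemma Qop_ray (ρ : QRep V) (m : ℕ) (i : Fin m) (r : Fin m → ℤ) (ε : ℤ)
    (h : ∀ j : ℕ, j < m → Qop ρ m (Pi.single i (j * ε) + r) = 0) (j : ℕ) :
    Qop ρ m (Pi.single i (j * ε) + r) = 0 := by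
  have hpow : ∀ (i : Fin m) (k : ℕ),
      (AddMonoidAlgebra.single (Pi.single i ε : Fin m → ℤ) (1 : ℂ)) ^ k
        = AddMonoidAlgebra.single (Pi.single i (k * ε)) 1 := by
    intro i k
    rw [AddMonoidAlgebra.single_pow, one_pow, ← Pi.single_smul]
    simp
  have hmem : ∀ k : ℕ, (AddMonoidAlgebra.single (Pi.single i ε : Fin m → ℤ) (1 : ℂ)) ^ k *
      AddMonoidAlgebra.single r 1 ∈ LinearMap.ker (Qlin ρ m) ↔
        Qop ρ m (Pi.single i (k * ε) + r) = 0 := by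
    intro k
    rw [hpow, AddMonoidAlgebra.single_mul_single, LinearMap.mem_ker, Qlin_single]
    simp
  rw [← hmem]
  refine all_pow_mem (LinearMap.ker (Qlin ρ m))
    (fun i => AddMonoidAlgebra.single (Pi.single i ε : Fin m → ℤ) (1 : ℂ)) ?_ i _ ?_ j
  · intro k f hf
    rw [LinearMap.mem_ker] at hf ⊢
    simp only [hpow]
    rw [Qlin_psum, hf]
    simp
  · intro j hj
    exact (hmem j).2 (h j hj)

lemma Qop_all (ρ : QRep V) (m n : ℕ) (hmn : m < n)
    (h : ∀ r : Fin m → ℤ, (∀ i, |r i| ≤ (n : ℤ)) → Qop ρ m r = 0) (S : Finset (Fin m)) :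
    ∀ r : Fin m → ℤ, (∀ i, i ∉ S → |r i| ≤ (n : ℤ)) → Qop ρ m r = 0 := by
  induction S using Finset.induction_on with
  | empty => intro r hr; exact h r fun i => hr i (by simp)
  | insert i S hi ih =>
    intro r hr
    have hr0 : ∀ k : ℤ, |k| ≤ n → Qop ρ m (Pi.single i k + Function.update r i 0) = 0 := by
      intro k hk
      refine ih _ fun j hj => ?_
      by_cases hji : j = i
      · subst hji; simpa using hk
      · simpa [hji] using hr j (by simp [hji, hj])
    have hrr : r = Pi.single i (r i) + Function.update r i 0 := by
      ext j
      by_cases hji : j = i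
      · subst hji; simp
      · simp [hji]
    rw [hrr]
    rcases Int.natAbs_eq (r i) with hn | hn
    · have := Qop_ray ρ m i (Function.update r i 0) 1
        (fun j hj => hr0 _ (by rw [mul_one, Nat.abs_cast]; omega)) (r i).natAbs
      rwa [mul_one, ← hn] at this
    · have := Qop_ray ρ m i (Function.update r i 0) (-1)
        (fun j hj => hr0 _ (by rw [mul_neg_one, abs_neg, Nat.abs_cast]; omega)) (r i).natAbs
      rwa [mul_neg_one, ← hn] at this

end Helpers

/-- Lemma 3.3 of the paper. If there are integers `n > m ≥ 1` such
that `Q_{r₁} Q_{r₂} ⋯ Q_{r_m} V = 0` for all indices in `{0, ±1, …, ±n}`, then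
`Q_{r₁} Q_{r₂} ⋯ Q_{r_m} V = 0` for all indices in `ℤ`. -/
theorem stmt6 {V : Type} [AddCommGroup V] [Module ℂ V] (ρ : QRep V)
    (m n : ℕ) (hm : 1 ≤ m) (hmn : m < n)
    (h : ∀ rs : List ℤ, rs.length = m → (∀ r ∈ rs, |r| ≤ (n : ℤ)) →
      ∀ v : V, ρ.Qcomp rs v = 0) :
    ∀ rs : List ℤ, rs.length = m → ∀ v : V, ρ.Qcomp rs v = 0 := by
  intro rs hrs v
  subst hrs
  have key := Qop_all ρ rs.length n hmn (fun r hr => by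
    ext v
    have := h (List.ofFn r) (by simp) (by
      intro x hx
      obtain ⟨i, rfl⟩ := (List.mem_ofFn' r x).1 hx
      exact hr i) v
    rw [Qcomp_eq] at this
    exact this) Finset.univ rs.get (fun i hi => absurd (Finset.mem_univ i) hi)
  rw [Qcomp_eq]
  have h2 : Qop ρ rs.length rs.get v = 0 := by rw [key]; rfl
  unfold Qop at h2
  rwa [List.ofFn_get] at h2
end
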